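/- arXiv:2204.04759 — 3 statements merged into one kernel-verified Lean document; each statement's English description precedes it below -/
import Mathlib

section
/- Let Ω ∈ F_k be a word of total length t that is not a proper power, whose canonical reduced form Ω = x_{k_t}^{ε_t}⋯x_{k_1}^{ε_1} satisfies k_1 ≠ k_t, and let w = Ω^d for some d ≥ 1. For each n, let ρ_{1,n}, …, ρ_{k,n} be independent uniformly distributed permutations of {1,…,n}. For h a divisor of d, let E_h be the event that the trajectory of the point 1 under Ω^h (i_0 := 1, and i_s := ρ_{j_s,n}^{δ_s}(i_{s−1}) for s = 1,…,ht, reading the letters of Ω^h from right to left) satisfies: i_0, …, i_{ht−1} pairwise distinct and i_{ht} = 1. Then lim_{n→∞} n · P({1 is a fixed point of w(ρ_{1,n},…,ρ_{k,n})} and none of the events E_h, h | d, occurs) = 0. -/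
/-!
The trajectory of `1` under `Ω ^ d`, when it closes up, is a closed walk of length `T = d t` in the
labelled graph of the permutations `ρ_j`. It visits `V` vertices and uses `E` oriented labelled
edges, and it never backtracks, not even cyclically, since `Ω` is cyclically reduced.

Combinatorial part. Each visited vertex carries at least two of the `2 E` half-edges. If `E ≤ V`,
then each carries exactly two (`visit_dichotomy`), so the walk goes around a simple cycle, always
in the same direction (`no_opposite`), and its letters repeat with the length `p` of this cycle
(`exists_cycle`). They also repeat with period `t`, hence with period `gcd p t`; as `Ω` is not a
proper power, `t` divides `p`, so `p = h t` with `h ∣ d` and `E_h` occurs. Hence the event under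
consideration forces `E ≥ V + 1` (`excess_of_fixed`).

Probabilistic part. A prescribed set of `E` edges is present with probability at most a constant
times `n ^ (-E)` (`prob_sat_le`), which is at most a constant times `n ^ (-V - 1)`. A union bound
over all possible trajectories from `1`, with the estimate `∑ n ^ (-V) = O(1 / n)` of
`sum_values_le`, gives probability `O(n⁻²)` (`prob_excess_le`), and `n` times this tends to `0`.
-/

open Filter

noncomputable section

/-- Probability of a set under a discrete distribution. -/
def prob {α : Type*} [Fintype α] (p : α → ℝ) (S : Set α) : ℝ :=
  ∑ x, S.indicator p x

/-- The permutation associated to a single letter `x_j^{±1}`. -/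
def letterPerm {n k : ℕ} (ρ : Fin k → Equiv.Perm (Fin n)) (l : Fin k × Bool) :
    Equiv.Perm (Fin n) :=
  if l.2 then ρ l.1 else (ρ l.1)⁻¹

/-- The trajectory of the point `x`: reading the letters of the list `L` from right to
left, `traj ρ L dflt x s` is the image `i_s` of `x` by the first `s` letters. -/
def traj {n k : ℕ} (ρ : Fin k → Equiv.Perm (Fin n)) (L : List (Fin k × Bool))
    (dflt : Fin k × Bool) (x : Fin n) : ℕ → Fin n
  | 0 => x
  | s + 1 => letterPerm ρ (L.getD (L.length - 1 - s) dflt) (traj ρ L dflt x s)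

/-- The event `E_h`: the trajectory `i_0 = 1, i_1, …, i_{ht}` of the point `1` under
the letters of `Ω^h` (read from right to left) has `i_0,…,i_{ht-1}` pairwise distinct
and `i_{ht} = 1`. -/
def Eh {k : ℕ} (hk : 0 < k) (Ω : FreeGroup (Fin k)) (h : ℕ) {n : ℕ} (hn : 0 < n)
    (ρ : Fin k → Equiv.Perm (Fin n)) : Prop :=
  (∀ s < h * Ω.toWord.length, ∀ s' < h * Ω.toWord.length, s ≠ s' →
      traj ρ ((Ω ^ h).toWord) (⟨0, hk⟩, true) ⟨0, hn⟩ s ≠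
        traj ρ ((Ω ^ h).toWord) (⟨0, hk⟩, true) ⟨0, hn⟩ s') ∧
    traj ρ ((Ω ^ h).toWord) (⟨0, hk⟩, true) ⟨0, hn⟩ (h * Ω.toWord.length) = ⟨0, hn⟩

/-! ### Walks and their edge sets -/

/-- The inverse letter. -/
def linv {k : ℕ} (l : Fin k × Bool) : Fin k × Bool := (l.1, !l.2)

/-- The walk from `x` that reads an infinite sequence of letters. -/
def walk {n k : ℕ} (ρ : Fin k → Equiv.Perm (Fin n)) (l : ℕ → Fin k × Bool) (x : Fin n) :
    ℕ → Fin n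
  | 0 => x
  | s + 1 => letterPerm ρ (l s) (walk ρ l x s)

/-- The constraint `ρ_j a = b`, encoded as `(j, a, b)`, that expresses that the letter `l` sends
`a` to `b`; the endpoints are exchanged when `l` is an inverse letter. -/
def edge {n k : ℕ} (l : Fin k × Bool) (a b : Fin n) : Fin k × Fin n × Fin n :=
  if l.2 then (l.1, a, b) else (l.1, b, a)

/-- The set of oriented labelled edges used by the first `T` steps of `i`. -/
def edges {n k : ℕ} (l : ℕ → Fin k × Bool) (i : ℕ → Fin n) (T : ℕ) :
    Finset (Fin k × Fin n × Fin n) :=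
  (Finset.range T).image fun s => edge (l s) (i s) (i (s + 1))

lemma linv_linv {k : ℕ} (l : Fin k × Bool) : linv (linv l) = l := by
  simp [linv]

lemma linv_ne {k : ℕ} (l : Fin k × Bool) : l ≠ linv l := by
  intro h
  have := congrArg Prod.snd h
  simp [linv] at this

lemma letterPerm_linv {n k : ℕ} (ρ : Fin k → Equiv.Perm (Fin n)) (l : Fin k × Bool) :
    letterPerm ρ (linv l) = (letterPerm ρ l)⁻¹ := by
  rcases l with ⟨j, b⟩
  cases b <;> simp [letterPerm, linv]

/-- A half-edge is a vertex together with the letter along which it is left. Every edge carries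
two half-edges, and every vertex of a reduced closed walk carries at least two: the one the walk
leaves by and the one it came from. So if there are at most as many edges as vertices, then every
vertex carries exactly two, and two visits to it use the same pair, in the same or in the opposite
order. -/
lemma visit_dichotomy {n k T : ℕ} (l : ℕ → Fin k × Bool) (i : ℕ → Fin n) (hT : 0 < T)
    (hred : ∀ s, l (s + 1) ≠ linv (l s))
    (hl : ∀ s, l (s + T) = l s) (hi : ∀ s, i (s + T) = i s)
    (hcard : (edges l i T).card ≤ ((Finset.range T).image i).card)
    (s s' : ℕ) (hss : i (s + 1) = i (s' + 1)) :
    (l (s + 1) = l (s' + 1) ∧ l s = l s') ∨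
      (l (s + 1) = linv (l s') ∧ l (s' + 1) = linv (l s)) := by
  classical
  set V := (Finset.range T).image i with hV
  set H : Finset (Fin n × (Fin k × Bool)) :=
    (edges l i T).image (fun e => (e.2.1, (e.1, true))) ∪
      (edges l i T).image (fun e => (e.2.2, (e.1, false))) with hH
  have hlm : ∀ s, l (s % T) = l s := Function.Periodic.map_mod_nat hl
  have him : ∀ s, i (s % T) = i s := Function.Periodic.map_mod_nat hi
  have hVm : ∀ s, i s ∈ V := fun s =>
    Finset.mem_image.2 ⟨s % T, Finset.mem_range.2 (Nat.mod_lt _ hT), him s⟩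
  have hem : ∀ s, edge (l s) (i s) (i (s + 1)) ∈ edges l i T := fun s => by
    refine Finset.mem_image.2 ⟨s % T, Finset.mem_range.2 (Nat.mod_lt _ hT), ?_⟩
    have : i (s % T + 1) = i (s + 1) := by
      rw [← him (s % T + 1), ← him (s + 1)]
      simp
    rw [hlm, him, this]
  have hout : ∀ s, (i s, l s) ∈ H := fun s => by
    have := hem s
    rcases h : l s with ⟨j, b⟩
    rw [h] at this
    cases b
    · exact Finset.mem_union_right _ (Finset.mem_image.2 ⟨_, this, by simp [edge]⟩)
    · exact Finset.mem_union_left _ (Finset.mem_image.2 ⟨_, this, by simp [edge]⟩)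
  have hin : ∀ s, (i (s + 1), linv (l s)) ∈ H := fun s => by
    have := hem s
    rcases h : l s with ⟨j, b⟩
    rw [h] at this
    cases b
    · exact Finset.mem_union_left _ (Finset.mem_image.2 ⟨_, this, by simp [edge, linv]⟩)
    · exact Finset.mem_union_right _ (Finset.mem_image.2 ⟨_, this, by simp [edge, linv]⟩)
  have hHcard : H.card ≤ 2 * V.card := by
    have h1 := Finset.card_union_le
      ((edges l i T).image (fun e => (e.2.1, (e.1, true))))
      ((edges l i T).image (fun e => (e.2.2, (e.1, false))))
    have h2 := Finset.card_image_le (s := edges l i T)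
      (f := fun e => (e.2.1, (e.1, true)))
    have h3 := Finset.card_image_le (s := edges l i T)
      (f := fun e => (e.2.2, (e.1, false)))
    rw [← hH] at h1
    omega
  have hmaps : (H : Set (Fin n × (Fin k × Bool))).MapsTo Prod.fst V := by
    intro p hp
    have hE : ∀ e ∈ edges l i T, e.2.1 ∈ V ∧ e.2.2 ∈ V := by
      intro e he
      obtain ⟨s, -, rfl⟩ := Finset.mem_image.1 he
      unfold edge
      split_ifs
      · exact ⟨hVm _, hVm _⟩
      · exact ⟨hVm _, hVm _⟩
    rcases Finset.mem_union.1 (Finset.mem_coe.1 hp) with h | h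
    · obtain ⟨e, he, rfl⟩ := Finset.mem_image.1 h
      exact (hE e he).1
    · obtain ⟨e, he, rfl⟩ := Finset.mem_image.1 h
      exact (hE e he).2
  have hpair : ∀ s, ({(i (s + 1), l (s + 1)), (i (s + 1), linv (l s))} :
      Finset (Fin n × (Fin k × Bool))) ⊆ H.filter (fun p => p.1 = i (s + 1)) := by
    intro s p hp
    rw [Finset.mem_insert, Finset.mem_singleton] at hp
    rw [Finset.mem_filter]
    rcases hp with rfl | rfl
    · exact ⟨hout _, rfl⟩
    · exact ⟨hin _, rfl⟩
  have hpc : ∀ s, ({(i (s + 1), l (s + 1)), (i (s + 1), linv (l s))} :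
      Finset (Fin n × (Fin k × Bool))).card = 2 := fun s =>
    Finset.card_pair fun h => hred s (congrArg Prod.snd h)
  have hge : ∀ v ∈ V, 2 ≤ (H.filter (fun p => p.1 = v)).card := by
    intro v hv
    obtain ⟨r, -, rfl⟩ := Finset.mem_image.1 hv
    -- Going round once more provides an incoming step also for the visit at time `0`.
    have hr : i (r + T - 1 + 1) = i r := by
      rw [Nat.sub_add_cancel (by omega), hi]
    rw [← hr, ← hpc (r + T - 1)]
    exact Finset.card_le_card (hpair _)
  have hle : ∀ v ∈ V, (H.filter (fun p => p.1 = v)).card ≤ 2 := by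
    by_contra! hcon
    obtain ⟨v, hv, hv2⟩ := hcon
    have := Finset.sum_lt_sum hge ⟨v, hv, hv2⟩
    rw [← Finset.card_eq_sum_card_fiberwise hmaps] at this
    simp at this
    omega
  have heq : ∀ s, ({(i (s + 1), l (s + 1)), (i (s + 1), linv (l s))} :
      Finset (Fin n × (Fin k × Bool))) = H.filter (fun p => p.1 = i (s + 1)) := fun s =>
    Finset.eq_of_subset_of_card_le (hpair s) (by rw [hpc]; exact hle _ (hVm _))
  have hkey := heq s
  rw [hss, ← heq s', ← hss] at hkey
  have m1 : (i (s + 1), l (s + 1)) ∈ ({(i (s' + 1), l (s' + 1)), (i (s' + 1), linv (l s'))} :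
      Finset (Fin n × (Fin k × Bool))) := by rw [← hss, ← hkey]; simp
  have m2 : (i (s + 1), linv (l s)) ∈ ({(i (s' + 1), l (s' + 1)), (i (s' + 1), linv (l s'))} :
      Finset (Fin n × (Fin k × Bool))) := by rw [← hss, ← hkey]; simp
  have hr := hred s
  simp only [Finset.mem_insert, Finset.mem_singleton, Prod.mk.injEq, hss, true_and] at m1 m2
  have hinj : ∀ a b : Fin k × Bool, linv a = linv b → a = b := fun a b h => by
    rw [← linv_linv a, h, linv_linv]
  rcases m1 with m1 | m1 <;> rcases m2 with m2 | m2
  · exact absurd (m1.trans m2.symm) hr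
  · exact Or.inl ⟨m1, hinj _ _ m2⟩
  · exact Or.inr ⟨m1, m2.symm⟩
  · exact absurd (m1.trans m2.symm) hr

/-- Opposite passages are impossible: following the later one backwards and the earlier one
forwards, they meet in the middle, where the word would have to cancel. -/
lemma no_opposite {n k : ℕ} (ρ : Fin k → Equiv.Perm (Fin n)) (l : ℕ → Fin k × Bool)
    (i : ℕ → Fin n) (hstep : ∀ s, i (s + 1) = letterPerm ρ (l s) (i s))
    (hred : ∀ s, l (s + 1) ≠ linv (l s))
    (hdich : ∀ s s', i (s + 1) = i (s' + 1) →
      (l (s + 1) = l (s' + 1) ∧ l s = l s') ∨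
      (l (s + 1) = linv (l s') ∧ l (s' + 1) = linv (l s))) (D : ℕ) :
    ∀ s, i (s + 1) = i (s + 1 + D) → l (s + 1) ≠ linv (l (s + D)) := by
  induction D using Nat.twoStepInduction with
  | zero => intro s _; exact hred s
  | one => intro s _; exact linv_ne _
  | more D ih _ =>
    intro s hs hopp
    have hback : i (s + 1 + 1) = i (s + 1 + 1 + D) := by
      have h1 := hstep (s + (D + 2))
      rw [show s + (D + 2) + 1 = s + 1 + (D + 2) by ring, ← hs] at h1
      rw [hstep (s + 1), hopp, letterPerm_linv, h1]
      rw [show s + 1 + 1 + D = s + (D + 2) by ring]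
      simp
    rcases hdich (s + 1) (s + 1 + D)
      (hback.trans (by rw [show s + 1 + 1 + D = s + 1 + D + 1 by ring])) with ⟨h1, -⟩ | ⟨h1, -⟩
    · apply hred (s + 1)
      rw [hopp, linv_linv, h1]
      congr 1
      ring
    · exact ih (s + 1) hback h1

/-- For a reduced closed walk with at most as many edges as vertices, the vertex determines the
next letter. -/
lemma letter_eq_of_vertex_eq {n k T : ℕ} (ρ : Fin k → Equiv.Perm (Fin n)) (l : ℕ → Fin k × Bool)
    (i : ℕ → Fin n) (hT : 0 < T) (hstep : ∀ s, i (s + 1) = letterPerm ρ (l s) (i s))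
    (hred : ∀ s, l (s + 1) ≠ linv (l s))
    (hl : ∀ s, l (s + T) = l s) (hi : ∀ s, i (s + T) = i s)
    (hcard : (edges l i T).card ≤ ((Finset.range T).image i).card)
    (s s' : ℕ) (hss : i s = i s') : l s = l s' := by
  have hdich := visit_dichotomy l i hT hred hl hi hcard
  have key : ∀ s D, i (s + 1) = i (s + 1 + D) → l (s + 1) = l (s + 1 + D) := by
    intro s D h
    rcases hdich s (s + D) (by rw [h, show s + D + 1 = s + 1 + D by ring]) with ⟨h1, -⟩ | ⟨h1, -⟩
    · rw [h1, show s + D + 1 = s + 1 + D by ring]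
    · exact absurd h1 (no_opposite ρ l i hstep hred hdich D s h)
  have key2 : ∀ s s', s ≤ s' → i s = i s' → l s = l s' := by
    intro s s' hle h
    have := key (s + T - 1) (s' - s)
    rw [show s + T - 1 + 1 + (s' - s) = s' + T by omega,
      show s + T - 1 + 1 = s + T by omega, hi, hi, hl, hl] at this
    exact this h
  rcases le_total s s' with h | h
  · exact key2 s s' h hss
  · exact (key2 s' s h hss.symm).symm

/-- A reduced closed walk with at most as many edges as vertices runs around a simple cycle, and
the letters repeat with the length of that cycle. -/
lemma exists_cycle {n k T : ℕ} (ρ : Fin k → Equiv.Perm (Fin n)) (l : ℕ → Fin k × Bool)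
    (i : ℕ → Fin n) (hT : 0 < T) (hstep : ∀ s, i (s + 1) = letterPerm ρ (l s) (i s))
    (hred : ∀ s, l (s + 1) ≠ linv (l s))
    (hl : ∀ s, l (s + T) = l s) (hi : ∀ s, i (s + T) = i s)
    (hcard : (edges l i T).card ≤ ((Finset.range T).image i).card) :
    ∃ p, 0 < p ∧ p ∣ T ∧ i p = i 0 ∧ (∀ s, l (s + p) = l s) ∧
      ∀ s < p, ∀ s' < p, s ≠ s' → i s ≠ i s' := by
  classical
  have hlet := letter_eq_of_vertex_eq ρ l i hT hstep hred hl hi hcard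
  have hex : ∃ p, 0 < p ∧ i p = i 0 := ⟨T, hT, by simpa using hi 0⟩
  obtain ⟨hp0, hp⟩ := Nat.find_spec hex
  have hmin : ∀ m, 0 < m → m < Nat.find hex → i m ≠ i 0 := fun m hm hlt h =>
    Nat.find_min hex hlt ⟨hm, h⟩
  set p := Nat.find hex
  have hshift : ∀ s s', i s = i s' → ∀ m, i (s + m) = i (s' + m) := by
    intro s s' h m
    induction m with
    | zero => exact h
    | succ m ih => rw [← add_assoc, ← add_assoc, hstep, hstep, ih, hlet _ _ ih]
  have hip : ∀ s, i (s + p) = i s := fun s => by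
    have := hshift p 0 hp s
    rwa [zero_add, add_comm] at this
  have hdist : ∀ s s', s < s' → s' < p → i s ≠ i s' := by
    intro s s' hlt hs' h
    have := hshift s s' h (p - s)
    rw [show s + (p - s) = p by omega, show s' + (p - s) = s' - s + p by omega, hip, hp] at this
    exact hmin (s' - s) (by omega) (by omega) this.symm
  refine ⟨p, hp0, ?_, hp, fun s => hlet _ _ (hip s), ?_⟩
  · have h1 : i (T % p) = i 0 := by
      rw [Function.Periodic.map_mod_nat hip]
      simpa using hi 0
    by_contra hnd
    exact hmin _ (Nat.pos_of_ne_zero fun h => hnd (Nat.dvd_of_mod_eq_zero h)) (Nat.mod_lt _ hp0) h1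
  · intro s hs s' hs' hne
    rcases lt_or_gt_of_ne hne with h | h
    · exact hdist s s' h hs'
    · exact (hdist s' s h hs).symm

/-! ### Counting permutations under prescribed values -/

/-- The tuple `ρ` satisfies every constraint `ρ_j a = b` with `(j, a, b) ∈ S`. -/
def Sat {n k : ℕ} (S : Finset (Fin k × Fin n × Fin n)) (ρ : Fin k → Equiv.Perm (Fin n)) : Prop :=
  ∀ e ∈ S, ρ e.1 e.2.1 = e.2.2

open Classical in
/-- Given a solution of `insert (j, a, b) S`, composing `ρ_j` with the transposition of `b` and
any `c` that is not a prescribed value of `S` gives a solution of `S`, and both the original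
solution and `c` can be read off from it. -/
lemma card_sat_insert {n k : ℕ} (S : Finset (Fin k × Fin n × Fin n)) (e : Fin k × Fin n × Fin n)
    (he : e ∉ S) :
    (Finset.univ.filter (Sat (insert e S))).card * (n - S.card) ≤
      (Finset.univ.filter (Sat S)).card := by
  obtain ⟨j, a, b⟩ := e
  set C : Finset (Fin n) := Finset.univ \ S.image (fun e => e.2.2) with hC
  have hCc : n - S.card ≤ C.card := by
    rw [hC, Finset.card_sdiff_of_subset (Finset.subset_univ _), Finset.card_univ, Fintype.card_fin]
    have := Finset.card_image_le (s := S) (f := fun e => e.2.2)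
    omega
  refine (Nat.mul_le_mul_left _ hCc).trans ?_
  rw [← Finset.card_product]
  refine Finset.card_le_card_of_injOn
    (fun p => Function.update p.1 j (Equiv.swap b p.2 * p.1 j)) ?_ ?_
  · rintro ⟨ρ, c⟩ hp
    simp only [Finset.coe_product, Set.mem_prod, Finset.mem_coe, Finset.mem_filter,
      Finset.mem_univ, true_and] at hp
    obtain ⟨hρ, hc⟩ := hp
    simp only [Finset.mem_coe, Finset.mem_filter, Finset.mem_univ, true_and]
    rintro ⟨j', a', b'⟩ he'
    have h1 : ρ j' a' = b' := hρ _ (Finset.mem_insert_of_mem he')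
    have h2 : ρ j a = b := hρ _ (Finset.mem_insert_self _ _)
    have hbc : b' ≠ c := by
      rintro rfl
      rw [hC, Finset.mem_sdiff] at hc
      exact hc.2 (Finset.mem_image.2 ⟨_, he', rfl⟩)
    by_cases hj : j' = j
    · subst hj
      have hbb : b' ≠ b := by
        rintro rfl
        have : a' = a := (ρ j').injective (h1.trans h2.symm)
        subst this
        exact he he'
      simp only [Function.update_self, Equiv.Perm.mul_apply, h1]
      exact Equiv.swap_apply_of_ne_of_ne hbb hbc
    · simpa only [Function.update_of_ne hj] using h1
  · rintro ⟨ρ, c⟩ hp ⟨ρ', c'⟩ hp' heq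
    simp only [Finset.coe_product, Set.mem_prod, Finset.mem_coe, Finset.mem_filter,
      Finset.mem_univ, true_and] at hp hp'
    have h2 : ρ j a = b := hp.1 _ (Finset.mem_insert_self _ _)
    have h2' : ρ' j a = b := hp'.1 _ (Finset.mem_insert_self _ _)
    have hj := congrFun heq j
    simp only [Function.update_self] at hj
    have hcc : c = c' := by
      have := congrArg (fun σ : Equiv.Perm (Fin n) => σ a) hj
      simpa [h2, h2'] using this
    subst hcc
    refine Prod.ext ?_ rfl
    funext j'
    by_cases hjj : j' = j
    · subst hjj
      exact mul_left_cancel hj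
    · have := congrFun heq j'
      simpa only [Function.update_of_ne hjj] using this

open Classical in
/-- Each of the at most `T` constraints divides the number of solutions by at least `n - T`. -/
lemma card_sat_le {n k T : ℕ} (S : Finset (Fin k × Fin n × Fin n)) (hS : S.card ≤ T) :
    (Finset.univ.filter (Sat S)).card * (n - T) ^ S.card ≤ n.factorial ^ k := by
  induction S using Finset.induction_on with
  | empty =>
    simp only [Finset.card_empty, pow_zero, mul_one]
    refine (Finset.card_le_univ _).trans ?_
    simp [Fintype.card_perm]
  | insert e S he ih =>
    rw [Finset.card_insert_of_notMem he] at hS ⊢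
    calc _ = (Finset.univ.filter (Sat (insert e S))).card * (n - T) * (n - T) ^ S.card := by ring
      _ ≤ (Finset.univ.filter (Sat (insert e S))).card * (n - S.card) * (n - T) ^ S.card := by
          gcongr
          omega
      _ ≤ (Finset.univ.filter (Sat S)).card * (n - T) ^ S.card := by
          gcongr
          exact card_sat_insert S e he
      _ ≤ _ := ih (by omega)

/-- The probability that `ρ` satisfies `S` is at most a constant times `n ^ (-|S|)`. -/
lemma prob_sat_le {n k T : ℕ} (S : Finset (Fin k × Fin n × Fin n)) (hS : S.card ≤ T)
    (hn : 2 * T + 1 ≤ n) :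
    prob (fun _ : Fin k → Equiv.Perm (Fin n) => ((n.factorial : ℝ) ^ k)⁻¹) {ρ | Sat S ρ} ≤
      2 ^ T * (1 / (n : ℝ)) ^ S.card := by
  classical
  have h := card_sat_le S hS
  have hn0 : (0 : ℝ) < n := by exact_mod_cast (by omega : 0 < n)
  have hnT : (n : ℝ) / 2 ≤ ((n - T : ℕ) : ℝ) := by
    rw [Nat.cast_sub (by omega)]
    have : (2 * T + 1 : ℝ) ≤ n := by exact_mod_cast hn
    linarith
  have h' : ((Finset.univ.filter (Sat S)).card : ℝ) * ((n : ℝ) / 2) ^ S.card ≤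
      (n.factorial : ℝ) ^ k := by
    calc _ ≤ ((Finset.univ.filter (Sat S)).card : ℝ) * ((n - T : ℕ) : ℝ) ^ S.card := by gcongr
      _ ≤ _ := by exact_mod_cast h
  have hf : (0 : ℝ) < (n.factorial : ℝ) ^ k := by positivity
  have hprob : prob (fun _ : Fin k → Equiv.Perm (Fin n) => ((n.factorial : ℝ) ^ k)⁻¹)
      {ρ | Sat S ρ} = ((Finset.univ.filter (Sat S)).card : ℝ) * ((n.factorial : ℝ) ^ k)⁻¹ := by
    simp [prob, Set.indicator_apply, Finset.sum_ite]
  rw [hprob, mul_inv_le_iff₀ hf]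
  have h2 : (2 : ℝ) ^ S.card ≤ 2 ^ T := pow_le_pow_right₀ (by norm_num) hS
  calc ((Finset.univ.filter (Sat S)).card : ℝ)
      = 2 ^ S.card * (1 / (n : ℝ)) ^ S.card *
        (((Finset.univ.filter (Sat S)).card : ℝ) * ((n : ℝ) / 2) ^ S.card) := by
        rw [mul_comm ((Finset.univ.filter (Sat S)).card : ℝ), ← mul_assoc, ← mul_pow, ← mul_pow]
        field_simp
        simp
    _ ≤ 2 ^ T * (1 / (n : ℝ)) ^ S.card * (n.factorial : ℝ) ^ k := by gcongr

/-- Summing `n ^ (-|W|)` over sequences with set of values `W ∋ x`: a new term either repeats one of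
at most `m + 1` previous values, or has at most `n` choices, which the extra factor `1 / n`
compensates. -/
lemma sum_values_le {n : ℕ} (hn : 0 < n) (x : Fin n) (m : ℕ) :
    ∑ f : Fin m → Fin n, (1 / (n : ℝ)) ^ (insert x (Finset.univ.image f)).card ≤
      ((m + 1).factorial : ℝ) * (1 / n) := by
  have hn0 : (0 : ℝ) < n := by exact_mod_cast hn
  induction m with
  | zero => simp
  | succ m ih =>
    have himg : ∀ (a : Fin n) (f : Fin m → Fin n),
        insert x (Finset.univ.image (Fin.cons a f : Fin (m + 1) → Fin n)) =
          insert a (insert x (Finset.univ.image f)) := by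
      intro a f
      ext y
      simp only [Finset.mem_insert, Finset.mem_image, Finset.mem_univ, true_and,
        Fin.exists_fin_succ, Fin.cons_zero, Fin.cons_succ]
      grind
    have hstep : ∀ W : Finset (Fin n), W.card ≤ m + 1 →
        ∑ a : Fin n, (1 / (n : ℝ)) ^ (insert a W).card ≤ ((m + 2 : ℕ) : ℝ) * (1 / n) ^ W.card := by
      intro W hW
      calc ∑ a : Fin n, (1 / (n : ℝ)) ^ (insert a W).card
          ≤ ∑ a : Fin n, ((if a ∈ W then (1 / (n : ℝ)) ^ W.card else 0) +
              (1 / (n : ℝ)) ^ (W.card + 1)) := by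
            refine Finset.sum_le_sum fun a _ => ?_
            split_ifs with ha
            · rw [Finset.insert_eq_of_mem ha]
              exact le_add_of_nonneg_right (by positivity)
            · rw [Finset.card_insert_of_notMem ha, zero_add]
        _ = ((W.card + 1 : ℕ) : ℝ) * (1 / n) ^ W.card := by
            rw [Finset.sum_add_distrib]
            simp [pow_succ]
            field_simp
        _ ≤ _ := by
            refine mul_le_mul_of_nonneg_right ?_ (by positivity)
            exact_mod_cast (by omega : W.card + 1 ≤ m + 2)
    rw [← (Fin.consEquiv (fun _ : Fin (m + 1) => Fin n)).sum_comp, Fintype.sum_prod_type_right]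
    have hcard : ∀ f : Fin m → Fin n, (insert x (Finset.univ.image f)).card ≤ m + 1 := fun f =>
      (Finset.card_insert_le _ _).trans (by
        simpa using Finset.card_image_le (s := Finset.univ) (f := f))
    calc _ = ∑ f : Fin m → Fin n, ∑ a : Fin n,
          (1 / (n : ℝ)) ^ (insert a (insert x (Finset.univ.image f))).card := by
          refine Finset.sum_congr rfl fun f _ => Finset.sum_congr rfl fun a _ => ?_
          rw [← himg]
          rfl
      _ ≤ ∑ f : Fin m → Fin n, ((m + 2 : ℕ) : ℝ) *
          (1 / n) ^ (insert x (Finset.univ.image f)).card :=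
          Finset.sum_le_sum fun f _ => hstep _ (hcard f)
      _ ≤ ((m + 2 : ℕ) : ℝ) * (((m + 1).factorial : ℝ) * (1 / n)) := by
          rw [← Finset.mul_sum]
          gcongr
      _ = _ := by
          rw [Nat.factorial_succ (m + 1)]
          push_cast
          ring

lemma prob_nonneg {α : Type*} [Fintype α] {c : ℝ} (hc : 0 ≤ c) (S : Set α) :
    0 ≤ prob (fun _ => c) S :=
  Finset.sum_nonneg fun _ _ => Set.indicator_nonneg (fun _ _ => hc) _

lemma prob_le_sum {α ι : Type*} [Fintype α] {c : ℝ} (hc : 0 ≤ c) (S : Set α) (I : Finset ι)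
    (U : ι → Set α) (h : ∀ x ∈ S, ∃ j ∈ I, x ∈ U j) :
    prob (fun _ => c) S ≤ ∑ j ∈ I, prob (fun _ => c) (U j) := by
  unfold prob
  rw [Finset.sum_comm]
  refine Finset.sum_le_sum fun x _ => ?_
  have hnn : ∀ j ∈ I, 0 ≤ (U j).indicator (fun _ => c) x := fun j _ =>
    Set.indicator_nonneg (fun _ _ => hc) _
  by_cases hx : x ∈ S
  · obtain ⟨j, hj, hxj⟩ := h x hx
    rw [Set.indicator_of_mem hx]
    refine le_trans ?_ (Finset.single_le_sum hnn hj)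
    rw [Set.indicator_of_mem hxj]
  · rw [Set.indicator_of_notMem hx]
    exact Finset.sum_nonneg hnn

/-- Walks with more edges than vertices: each trajectory of `T` steps costs `n ^ (-#edges)`, so the
probability that the walk from `x` is of this kind is `O(n⁻²)`. -/
lemma prob_excess_le {n k : ℕ} (l : ℕ → Fin k × Bool) (T : ℕ) (hn : 2 * T + 1 ≤ n) (x : Fin n) :
    prob (fun _ : Fin k → Equiv.Perm (Fin n) => ((n.factorial : ℝ) ^ k)⁻¹)
      {ρ | ((Finset.range (T + 1)).image (walk ρ l x)).card + 1 ≤ (edges l (walk ρ l x) T).card} ≤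
      2 ^ T * (1 / (n : ℝ)) * (((T + 2).factorial : ℝ) * (1 / n)) := by
  classical
  have hn0 : (0 : ℝ) < n := by exact_mod_cast (by omega : 0 < n)
  have hn1 : 1 / (n : ℝ) ≤ 1 := by
    rw [div_le_one hn0]
    exact_mod_cast (by omega : 1 ≤ n)
  set E : (Fin (T + 1) → Fin n) → Finset (Fin k × Fin n × Fin n) := fun f =>
    Finset.univ.image (fun s : Fin T => edge (l s) (f s.castSucc) (f s.succ)) with hE
  set W : (Fin (T + 1) → Fin n) → Finset (Fin n) := fun f => insert x (Finset.univ.image f) with hW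
  set I : Finset (Fin (T + 1) → Fin n) :=
    Finset.univ.filter fun f => (W f).card + 1 ≤ (E f).card with hI
  have hEc : ∀ f, (E f).card ≤ T := fun f => Finset.card_image_le.trans (by simp)
  refine (prob_le_sum (by positivity) _ I (fun f => {ρ | Sat (E f) ρ}) ?_).trans ?_
  · intro ρ hρ
    set f : Fin (T + 1) → Fin n := fun s => walk ρ l x s with hf
    have hEf : E f = edges l (walk ρ l x) T := by
      ext e
      simp only [hE, hf, edges, Finset.mem_image, Finset.mem_univ, true_and, Finset.mem_range,
        Fin.val_castSucc, Fin.val_succ]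
      constructor
      · rintro ⟨s, rfl⟩
        exact ⟨s, s.2, rfl⟩
      · rintro ⟨s, hs, rfl⟩
        exact ⟨⟨s, hs⟩, rfl⟩
    have hWf : W f = (Finset.range (T + 1)).image (walk ρ l x) := by
      ext y
      simp only [hW, hf, Finset.mem_insert, Finset.mem_image, Finset.mem_univ, true_and,
        Finset.mem_range]
      constructor
      · rintro (rfl | ⟨s, rfl⟩)
        · exact ⟨0, by omega, rfl⟩
        · exact ⟨s, s.2, rfl⟩
      · rintro ⟨s, hs, rfl⟩
        exact Or.inr ⟨⟨s, hs⟩, rfl⟩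
    refine ⟨f, ?_, ?_⟩
    · rw [hI, Finset.mem_filter, hEf, hWf]
      exact ⟨Finset.mem_univ _, hρ⟩
    · show Sat (E f) ρ
      rw [hEf]
      intro e he
      obtain ⟨s, -, rfl⟩ := Finset.mem_image.1 he
      rcases h : l s with ⟨j, b⟩
      have hw : walk ρ l x (s + 1) = letterPerm ρ (l s) (walk ρ l x s) := rfl
      cases b <;> simp [edge, hw, h, letterPerm]
  · calc _ ≤ ∑ f ∈ I, 2 ^ T * (1 / (n : ℝ)) ^ (E f).card :=
          Finset.sum_le_sum fun f _ => prob_sat_le _ (hEc f) hn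
      _ ≤ ∑ f ∈ I, 2 ^ T * (1 / (n : ℝ)) * (1 / (n : ℝ)) ^ (W f).card := by
          refine Finset.sum_le_sum fun f hf => ?_
          rw [mul_assoc, ← pow_succ']
          gcongr ?_ * ?_
          exact pow_le_pow_of_le_one (by positivity) hn1 (Finset.mem_filter.1 hf).2
      _ ≤ ∑ f, 2 ^ T * (1 / (n : ℝ)) * (1 / (n : ℝ)) ^ (W f).card :=
          Finset.sum_le_sum_of_subset_of_nonneg (Finset.subset_univ _) fun _ _ _ => by positivity
      _ ≤ _ := by
          rw [← Finset.mul_sum]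
          gcongr
          exact sum_values_le (by omega) x (T + 1)

/-! ### Powers of a word and their letters -/

/-- The periodic sequence of letters of the word `u`, read from right to left again and again. -/
def letters {k : ℕ} (u : List (Fin k × Bool)) (dflt : Fin k × Bool) (s : ℕ) : Fin k × Bool :=
  u.getD (u.length - 1 - s % u.length) dflt

lemma length_replicate_flatten {α : Type*} (u : List α) (h : ℕ) :
    (List.replicate h u).flatten.length = h * u.length := by
  simp

lemma getD_replicate_flatten {α : Type*} (u : List α) (c : α) (h m : ℕ) (hm : m < h * u.length) :
    (List.replicate h u).flatten.getD m c = u.getD (m % u.length) c := by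
  induction h generalizing m with
  | zero => simp at hm
  | succ h ih =>
    rw [List.replicate_succ, List.flatten_cons]
    rcases lt_or_ge m u.length with h1 | h1
    · rw [List.getD_append _ _ _ _ h1, Nat.mod_eq_of_lt h1]
    · rw [List.getD_append_right _ _ _ _ h1, ih, Nat.mod_eq_sub_mod h1]
      rw [add_mul] at hm
      omega

lemma letters_periodic {k : ℕ} (u : List (Fin k × Bool)) (c : Fin k × Bool) (s : ℕ) :
    letters u c (s + u.length) = letters u c s := by
  simp [letters]

lemma letters_eq {k : ℕ} (u : List (Fin k × Bool)) (c : Fin k × Bool) (h s : ℕ)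
    (hs : s < h * u.length) :
    (List.replicate h u).flatten.getD ((List.replicate h u).flatten.length - 1 - s) c =
      letters u c s := by
  have ht : 0 < u.length := by
    rcases Nat.eq_zero_or_pos u.length with h0 | h0
    · simp [h0] at hs
    · exact h0
  rw [length_replicate_flatten, getD_replicate_flatten _ _ _ _ (by omega), letters]
  congr 1
  have hq : s / u.length < h := Nat.div_lt_of_lt_mul (by rwa [mul_comm])
  have hr := Nat.mod_lt s ht
  have hs' := Nat.div_add_mod s u.length
  obtain ⟨q, hq'⟩ : ∃ q, h = s / u.length + q + 1 := ⟨h - s / u.length - 1, by omega⟩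
  have : h * u.length - 1 - s = u.length - 1 - s % u.length + u.length * q := by
    have h1 : h * u.length = u.length * (s / u.length) + u.length * q + u.length := by
      conv_lhs => rw [hq']
      ring
    omega
  rw [this, Nat.add_mul_mod_self_left, Nat.mod_eq_of_lt (by omega)]

/-- No two cyclically consecutive letters cancel: inside `u` by reducedness, and across the boundary
between two copies because the two extremal letters have distinct indices. -/
lemma letters_reduced {k : ℕ} (u : List (Fin k × Bool)) (c : Fin k × Bool) (hu : u ≠ [])
    (hred : FreeGroup.IsReduced u)
    (hends : ∀ a b : Fin k × Bool, u.head? = some a → u.getLast? = some b → a.1 ≠ b.1) (s : ℕ) :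
    letters u c (s + 1) ≠ linv (letters u c s) := by
  have ht : 0 < u.length := List.length_pos_iff.2 hu
  have hr := Nat.mod_lt s ht
  intro heq
  have h1 : (letters u c (s + 1)).1 = (letters u c s).1 := by rw [heq]; rfl
  have h2 : (letters u c (s + 1)).2 ≠ (letters u c s).2 := by rw [heq]; simp [linv]
  unfold letters at h1 h2
  rcases Nat.lt_or_ge (s % u.length + 1) u.length with hlt | hge
  · have hmod : (s + 1) % u.length = s % u.length + 1 := by
      rw [Nat.add_mod, Nat.mod_eq_of_lt (a := 1) (by omega), Nat.mod_eq_of_lt hlt]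
    set q := u.length - 1 - (s % u.length + 1) with hq
    rw [hmod, show u.length - 1 - s % u.length = q + 1 by omega, ← hq,
      List.getD_eq_getElem _ _ (by omega), List.getD_eq_getElem _ _ (by omega)] at h1 h2
    exact h2 (List.isChain_iff_getElem.1 hred q (by omega) h1)
  · have hmod : (s + 1) % u.length = 0 := by
      rw [show s + 1 = u.length * (s / u.length) + u.length by
        have := Nat.div_add_mod s u.length
        omega]
      simp
    rw [hmod, show u.length - 1 - s % u.length = 0 by omega,
      List.getD_eq_getElem _ _ (by omega), List.getD_eq_getElem _ _ (by omega)] at h1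
    refine hends u[0] (u[u.length - 1]) ?_ ?_ h1.symm
    · rw [List.head?_eq_getElem?, List.getElem?_eq_getElem ht]
    · rw [List.getLast?_eq_getElem?, List.getElem?_eq_getElem]

/-- Periods of a sequence are closed under greatest common divisors, by Euclid's algorithm. -/
lemma periodic_gcd {α : Type*} (l : ℕ → α) (a b : ℕ) (ha : ∀ s, l (s + a) = l s)
    (hb : ∀ s, l (s + b) = l s) : ∀ s, l (s + a.gcd b) = l s := by
  induction a, b using Nat.gcd.induction with
  | H0 b => simpa using hb
  | H1 a b _ ih =>
    rw [Nat.gcd_rec]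
    refine ih (fun s => ?_) ha
    have hmul : ∀ q s, l (s + a * q) = l s := by
      intro q
      induction q with
      | zero => simp
      | succ q ihq => intro s; rw [mul_add, mul_one, ← add_assoc, ha, ihq]
    rw [← hmul (b / a) (s + b % a), add_assoc, Nat.mod_add_div, hb]

/-- If the letters of a word of length `t` repeat with a period dividing `t`, then the word is a
power of its initial segment of that length. -/
lemma eq_replicate_of_periodic {k : ℕ} (u : List (Fin k × Bool)) (c : Fin k × Bool) (g e : ℕ)
    (hg : 0 < g) (hge : u.length = e * g) (hl : ∀ s, letters u c (s + g) = letters u c s) :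
    u = (List.replicate e (u.take g)).flatten := by
  rcases Nat.eq_zero_or_pos e with rfl | he
  · have : u = [] := List.length_eq_zero_iff.1 (by simpa using hge)
    simp [this]
  have hgle : g ≤ u.length := by rw [hge]; exact Nat.le_mul_of_pos_left _ he
  have htl : (u.take g).length = g := by simp [hgle]
  have hlen : (List.replicate e (u.take g)).flatten.length = u.length := by
    rw [length_replicate_flatten, htl, hge]
  have hmul : ∀ q s, letters u c (s + g * q) = letters u c s := by
    intro q
    induction q with
    | zero => simp
    | succ q ihq => intro s; rw [mul_add, mul_one, ← add_assoc, hl, ihq]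
  have hlet : ∀ p < u.length, letters u c (u.length - 1 - p) = u.getD p c := by
    intro p hp
    rw [letters, Nat.mod_eq_of_lt (by omega)]
    congr 1
    omega
  refine List.ext_getElem hlen.symm fun p hp hp' => ?_
  rw [← List.getD_eq_getElem u c hp, ← List.getD_eq_getElem _ c hp',
    getD_replicate_flatten _ _ _ _ (by rw [htl, ← hge]; exact hp), htl]
  have hr := Nat.mod_lt p hg
  have hdm := Nat.mod_add_div p g
  rw [List.getD_eq_getElem (u.take g) c (by omega), List.getElem_take,
    ← List.getD_eq_getElem u c (by omega), ← hlet p hp, ← hlet (p % g) (by omega),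
    ← hmul (p / g) (u.length - 1 - p)]
  congr 1
  omega

lemma traj_eq_walk {n k : ℕ} (ρ : Fin k → Equiv.Perm (Fin n)) (L : List (Fin k × Bool))
    (l : ℕ → Fin k × Bool) (c : Fin k × Bool) (x : Fin n)
    (hl : ∀ s < L.length, L.getD (L.length - 1 - s) c = l s) (s : ℕ) (hs : s ≤ L.length) :
    traj ρ L c x s = walk ρ l x s := by
  induction s with
  | zero => rfl
  | succ s ih => rw [traj, walk, hl s hs, ih (by omega)]

lemma traj_cons {n k : ℕ} (ρ : Fin k → Equiv.Perm (Fin n)) (a : Fin k × Bool)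
    (L : List (Fin k × Bool)) (c : Fin k × Bool) (x : Fin n) (s : ℕ) (hs : s ≤ L.length) :
    traj ρ (a :: L) c x s = traj ρ L c x s := by
  induction s with
  | zero => rfl
  | succ s ih =>
    rw [traj, traj, ih (by omega), List.length_cons,
      show L.length + 1 - 1 - s = (L.length - 1 - s) + 1 by omega, List.getD_cons_succ]

lemma traj_length {n k : ℕ} (ρ : Fin k → Equiv.Perm (Fin n)) (L : List (Fin k × Bool))
    (c : Fin k × Bool) (x : Fin n) :
    traj ρ L c x L.length = FreeGroup.lift ρ (FreeGroup.mk L) x := by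
  induction L with
  | nil => rfl
  | cons a L ih =>
    rw [List.length_cons, traj, traj_cons _ _ _ _ _ _ le_rfl, ih, FreeGroup.lift_mk,
      FreeGroup.lift_mk, List.map_cons, List.prod_cons, Equiv.Perm.mul_apply, List.length_cons,
      show L.length + 1 - 1 - L.length = 0 by omega, List.getD_cons_zero]
    rcases a with ⟨j, b⟩
    cases b <;> rfl

lemma toWord_pow_eq {k : ℕ} (Ω : FreeGroup (Fin k))
    (hends : ∀ a b : Fin k × Bool, Ω.toWord.head? = some a →
      Ω.toWord.getLast? = some b → a.1 ≠ b.1) (h : ℕ) :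
    (Ω ^ h).toWord = (List.replicate h Ω.toWord).flatten := by
  have hc : FreeGroup.IsCyclicallyReduced Ω.toWord :=
    ⟨FreeGroup.isReduced_toWord, fun a ha b hb hab => absurd hab.symm (hends b a hb ha)⟩
  rw [FreeGroup.toWord_pow]
  exact (hc.flatten_replicate h).isReduced.reduce_eq

/-! ### Fixed points without a simple cycle -/

/-- If `1` is fixed by `Ω ^ d` and no event `E_h` occurs, then the closed walk of `1` uses more
edges than vertices: otherwise it would run around a simple cycle whose length `p` is a period of
the letters, and, `Ω` not being a proper power, `p = h t` with `t` the length of `Ω`. -/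
lemma excess_of_fixed {n k : ℕ} (hk : 0 < k) (hn : 0 < n) (Ω : FreeGroup (Fin k)) (hΩ1 : Ω ≠ 1)
    (hΩ : ¬ ∃ (Ω' : FreeGroup (Fin k)) (e : ℕ), 2 ≤ e ∧ Ω = Ω' ^ e)
    (hends : ∀ a b : Fin k × Bool, Ω.toWord.head? = some a →
      Ω.toWord.getLast? = some b → a.1 ≠ b.1)
    (d : ℕ) (hd : 1 ≤ d) (ρ : Fin k → Equiv.Perm (Fin n))
    (hfix : FreeGroup.lift ρ (Ω ^ d) ⟨0, hn⟩ = ⟨0, hn⟩) (hE : ∀ h, h ∣ d → ¬ Eh hk Ω h hn ρ) :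
    let l := letters Ω.toWord (⟨0, hk⟩, true)
    let T := d * Ω.toWord.length
    ((Finset.range (T + 1)).image (walk ρ l ⟨0, hn⟩)).card + 1 ≤
      (edges l (walk ρ l ⟨0, hn⟩) T).card := by
  intro l T
  set u := Ω.toWord with hu
  set c : Fin k × Bool := (⟨0, hk⟩, true) with hcd
  have hune : u ≠ [] := fun h => hΩ1 (FreeGroup.toWord_eq_nil_iff.1 h)
  have ht : 0 < u.length := List.length_pos_iff.2 hune
  have hT : 0 < T := Nat.mul_pos hd ht
  set i := walk ρ l ⟨0, hn⟩ with hi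
  have htraj : ∀ h s, s ≤ h * u.length → traj ρ (Ω ^ h).toWord c ⟨0, hn⟩ s = i s := by
    intro h s hs
    rw [toWord_pow_eq Ω hends]
    refine traj_eq_walk ρ _ l c _ (fun s hs => letters_eq u c h s ?_) s ?_
    · rwa [length_replicate_flatten] at hs
    · rwa [length_replicate_flatten]
  have hlen : (Ω ^ d).toWord.length = T := by
    rw [toWord_pow_eq Ω hends, length_replicate_flatten]
  have hclosed : i T = i 0 := by
    rw [← htraj d T le_rfl, ← hlen, traj_length, FreeGroup.mk_toWord, hfix]
    rfl
  have hl : ∀ s, l (s + T) = l s := Function.Periodic.nat_mul (letters_periodic u c) d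
  have hip : ∀ s, i (s + T) = i s := by
    intro s
    induction s with
    | zero => rw [zero_add, hclosed]
    | succ s ih =>
      rw [show s + 1 + T = s + T + 1 by ring]
      show letterPerm ρ (l (s + T)) (i (s + T)) = letterPerm ρ (l s) (i s)
      rw [hl, ih]
  have hV : (Finset.range (T + 1)).image i = (Finset.range T).image i := by
    rw [Finset.range_add_one, Finset.image_insert, hclosed]
    exact Finset.insert_eq_of_mem (Finset.mem_image_of_mem _ (Finset.mem_range.2 hT))
  rw [hV]
  by_contra hcon
  obtain ⟨p, hp0, hpT, hpi, hpl, hpd⟩ := exists_cycle ρ l i hT (fun _ => rfl)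
    (letters_reduced u c hune FreeGroup.isReduced_toWord hends) hl hip (by omega)
  have hgp := periodic_gcd l p u.length hpl (letters_periodic u c)
  obtain ⟨e, he⟩ := Nat.gcd_dvd_right p u.length
  have hg0 : 0 < p.gcd u.length := Nat.gcd_pos_of_pos_left _ hp0
  have hpow : Ω = FreeGroup.mk (u.take (p.gcd u.length)) ^ e := by
    rw [FreeGroup.pow_mk, ← eq_replicate_of_periodic u c _ e hg0 (by rw [mul_comm, ← he]) hgp,
      hu, FreeGroup.mk_toWord]
  have he1 : e = 1 := by
    have h1 : ¬ 2 ≤ e := fun h => hΩ ⟨_, e, h, hpow⟩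
    have h0 : e ≠ 0 := by
      rintro rfl
      omega
    omega
  have hgt : u.length ∣ p := by
    have h1 := Nat.gcd_dvd_left p u.length
    rwa [show p.gcd u.length = u.length by rw [he1, mul_one] at he; exact he.symm] at h1
  obtain ⟨h, rfl⟩ := hgt
  have hhd : h ∣ d := by
    have : u.length * h ∣ u.length * d := by rwa [mul_comm u.length d]
    exact Nat.dvd_of_mul_dvd_mul_left ht this
  refine hE h hhd ⟨fun s hs s' hs' hne => ?_, ?_⟩
  · rw [← hu] at hs hs'
    rw [htraj h s hs.le, htraj h s' hs'.le]
    exact hpd s (by rwa [mul_comm]) s' (by rwa [mul_comm]) hne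
  · rw [← hu, htraj h _ le_rfl, mul_comm, hpi]
    rfl

/-- For `Ω` of total length `t`, not a proper power, cyclically reduced with two
distinct extremal letters, `w = Ω^d` and independent uniform permutations: the
probability that `1` is a fixed point of `w(ρ_{1,n},…,ρ_{k,n})` while none of the
events `E_h`, `h ∣ d`, occurs, is `o(1/n)`. -/
theorem uniform_fixed_point_without_trajectory_event
    {k : ℕ} (hk : 0 < k) (Ω : FreeGroup (Fin k)) (hΩ1 : Ω ≠ 1)
    (hΩ : ¬ ∃ (Ω' : FreeGroup (Fin k)) (e : ℕ), 2 ≤ e ∧ Ω = Ω' ^ e)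
    (hends : ∀ a b : Fin k × Bool, Ω.toWord.head? = some a →
      Ω.toWord.getLast? = some b → a.1 ≠ b.1)
    (d : ℕ) (hd : 1 ≤ d) :
    Tendsto (fun n : ℕ =>
      if hn : 0 < n then
        (n : ℝ) * prob (fun _ : Fin k → Equiv.Perm (Fin n) => ((n.factorial : ℝ) ^ k)⁻¹)
          {ρ | (FreeGroup.lift ρ) (Ω ^ d) ⟨0, hn⟩ = ⟨0, hn⟩ ∧
            ∀ h, h ∣ d → ¬ Eh hk Ω h hn ρ}
      else 0) atTop (nhds 0) := by
  set l := letters Ω.toWord (⟨0, hk⟩, true) with hl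
  set T := d * Ω.toWord.length with hT
  set K : ℝ := 2 ^ T * ((T + 2).factorial : ℝ) with hK
  have hlim : Tendsto (fun n : ℕ => K / (n : ℝ)) atTop (nhds 0) :=
    tendsto_const_div_atTop_nhds_zero_nat K
  refine tendsto_of_tendsto_of_tendsto_of_le_of_le' tendsto_const_nhds hlim ?_ ?_
  · refine Eventually.of_forall fun n => ?_
    split_ifs
    · exact mul_nonneg (Nat.cast_nonneg _) (prob_nonneg (by positivity) _)
    · exact le_rfl
  · filter_upwards [eventually_ge_atTop (2 * T + 1)] with n hn
    have hn0 : 0 < n := by omega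
    have hnr : (0 : ℝ) < n := by exact_mod_cast hn0
    rw [dif_pos hn0]
    have hb := prob_excess_le (k := k) l T hn ⟨0, hn0⟩
    have hmono : prob (fun _ : Fin k → Equiv.Perm (Fin n) => ((n.factorial : ℝ) ^ k)⁻¹)
        {ρ | (FreeGroup.lift ρ) (Ω ^ d) ⟨0, hn0⟩ = ⟨0, hn0⟩ ∧ ∀ h, h ∣ d → ¬ Eh hk Ω h hn0 ρ} ≤
        prob (fun _ : Fin k → Equiv.Perm (Fin n) => ((n.factorial : ℝ) ^ k)⁻¹)
        {ρ | ((Finset.range (T + 1)).image (walk ρ l ⟨0, hn0⟩)).card + 1 ≤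
          (edges l (walk ρ l ⟨0, hn0⟩) T).card} := by
      refine Finset.sum_le_sum fun ρ _ => Set.indicator_le_indicator_of_subset ?_ ?_ ρ
      · exact fun ρ hρ => excess_of_fixed hk hn0 Ω hΩ1 hΩ hends d hd ρ hρ.1 hρ.2
      · intro _
        positivity
    calc _ ≤ (n : ℝ) * (2 ^ T * (1 / (n : ℝ)) * (((T + 2).factorial : ℝ) * (1 / n))) := by
          gcongr
          exact hmono.trans hb
      _ = K / n := by
          rw [hK]
          field_simp
end
end

section
/- Let (σ_n) and (ρ_n) be two sequences of random permutations of {1,…,n}, each with conjugation-invariant distribution. Then the following are equivalent: (1) for every Young diagram μ, both limits lim_{n→∞} n^{ℓ(μ)} P(σ_n ∈ A^{μ}) and lim_{n→∞} n^{ℓ(μ)} P(ρ_n ∈ A^{μ}) exist and are equal; (2) for every d′ ≥ 1 and every monomial P ∈ ℝ[x_1,…,x_{d′}], both limits lim_{n→∞} E(P(#_1(σ_n),…,#_{d′}(σ_n))) and lim_{n→∞} E(P(#_1(ρ_n),…,#_{d′}(ρ_n))) exist and are equal. -/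
/-!
For `n ≥ ℓ(μ)`, conjugation invariance gives every injective `ℓ(μ)`-tuple of points the same
probability of being marked, that is, of lying on pairwise distinct cycles of lengths `μ_i`.
Hence the expected number of marked tuples (`markCount`) is
`n (n - 1) ⋯ (n - ℓ(μ) + 1) * P(A^μ)` (`sum_markCount_eq`), which is asymptotically equivalent
to `n ^ ℓ(μ) * P(A^μ)` (`tendsto_prob_iff`).

A marked tuple extends by one more point on an `ℓ`-cycle in `ℓ * (#_ℓ - #{i | μ i = ℓ})` ways,
so `markCount (ℓ, μ) = ℓ * (#_ℓ - #{i | μ i = ℓ}) * markCount μ` (`markCount_cons`). Reading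
this recursion in both directions shows that the marked tuple counts and the monomials in the
cycle counts span the same space of functionals (`span_markSet`). The functionals whose
expectations converge to a common limit form a linear subspace (`commonLimit`), and each of
the two conditions says that this subspace contains one of the two spanning families.
-/

open Filter

noncomputable section

/-- Length of the cycle of `σ` containing the point `x`. -/
def cycLen {n : ℕ} (σ : Equiv.Perm (Fin n)) (x : Fin n) : ℕ :=
  Function.minimalPeriod σ x

/-- `#_ℓ(σ)`: the number of cycles of length `ℓ` of `σ`
(fixed points counting as cycles of length 1). -/
def cycCount {n : ℕ} (σ : Equiv.Perm (Fin n)) (ℓ : ℕ) : ℕ :=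
  (Finset.univ.filter fun x => cycLen σ x = ℓ).card / ℓ

/-- `A^μ`: the set of permutations `σ` such that, for `1 ≤ i ≤ ℓ(μ)`, the point `i`
lies in a cycle of length `μ_i`, and the points `1,…,ℓ(μ)` lie in pairwise distinct
cycles of `σ`.  (For `n ≥ ℓ(μ)` all the guards `(i : ℕ) < n` are satisfied.) -/
def Aset {n m : ℕ} (μ : Fin m → ℕ) : Set (Equiv.Perm (Fin n)) :=
  {σ | (∀ i : Fin m, ∀ hi : (i : ℕ) < n, cycLen σ ⟨i, hi⟩ = μ i) ∧
    ∀ i j : Fin m, i ≠ j → ∀ (hi : (i : ℕ) < n) (hj : (j : ℕ) < n),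
      ¬ σ.SameCycle ⟨i, hi⟩ ⟨j, hj⟩}

/-! ### Cycles and cycle lengths -/

section Cycles

variable {n : ℕ}

lemma cycLen_eq_iff {σ τ : Equiv.Perm (Fin n)} {x y : Fin n}
    (h : ∀ k : ℕ, (σ ^ k) x = x ↔ (τ ^ k) y = y) : cycLen σ x = cycLen τ y := by
  unfold cycLen
  rw [Function.minimalPeriod_eq_minimalPeriod_iff]
  intro k
  simpa [Function.IsPeriodicPt, Function.IsFixedPt, Equiv.Perm.iterate_eq_pow] using h k

lemma cycLen_conj (σ τ : Equiv.Perm (Fin n)) (x : Fin n) :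
    cycLen (τ⁻¹ * σ * τ) x = cycLen σ (τ x) := by
  apply cycLen_eq_iff
  intro k
  have : (τ⁻¹ * σ * τ) ^ k = τ⁻¹ * σ ^ k * τ := by
    simpa using (conj_pow (i := k) (a := τ⁻¹) (b := σ))
  rw [this, Equiv.Perm.mul_apply, Equiv.Perm.mul_apply, Equiv.Perm.inv_eq_iff_eq, eq_comm]

lemma sameCycle_conj_iff (σ τ : Equiv.Perm (Fin n)) (x y : Fin n) :
    (τ⁻¹ * σ * τ).SameCycle x y ↔ σ.SameCycle (τ x) (τ y) := by
  simpa using (Equiv.Perm.sameCycle_conj (f := σ) (g := τ⁻¹) (x := x) (y := y))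

open Classical in
lemma card_sameCycle (σ : Equiv.Perm (Fin n)) (x : Fin n) :
    (Finset.univ.filter fun y => σ.SameCycle x y).card = cycLen σ x := by
  have h := MulAction.minimalPeriod_eq_card σ x
  have h' : cycLen σ x = Function.minimalPeriod (fun y => σ • y) x := rfl
  rw [h', h, ← Fintype.card_subtype]
  refine Fintype.card_congr (Equiv.subtypeEquivRight fun y => ?_)
  rw [MulAction.mem_orbit_iff]
  constructor
  · rintro ⟨k, hk⟩
    exact ⟨⟨σ ^ k, k, rfl⟩, hk⟩
  · rintro ⟨⟨_, k, rfl⟩, hk⟩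
    exact ⟨k, hk⟩

lemma cycLen_eq_of_sameCycle {σ : Equiv.Perm (Fin n)} {x y : Fin n} (h : σ.SameCycle x y) :
    cycLen σ x = cycLen σ y := by
  classical
  rw [← card_sameCycle, ← card_sameCycle]
  congr 1
  ext z
  simp only [Finset.mem_filter, Finset.mem_univ, true_and]
  exact ⟨h.symm.trans, h.trans⟩

/-- The division in `cycCount` is exact: the points on `ℓ`-cycles split into classes of
size `ℓ`. -/
lemma mul_cycCount (σ : Equiv.Perm (Fin n)) (ℓ : ℕ) :
    ℓ * cycCount σ ℓ = (Finset.univ.filter fun x => cycLen σ x = ℓ).card := by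
  classical
  unfold cycCount
  apply Nat.mul_div_cancel'
  rw [Finset.card_eq_sum_card_image
    (fun x => (Quotient.mk (Equiv.Perm.SameCycle.setoid σ) x))]
  refine Finset.dvd_sum fun c hc => ?_
  obtain ⟨x, hx, rfl⟩ := Finset.mem_image.1 hc
  have hx : cycLen σ x = ℓ := by simpa using hx
  refine dvd_of_eq ((hx.symm.trans (card_sameCycle σ x).symm).trans ?_)
  congr 1
  ext y
  simp only [Finset.mem_filter, Finset.mem_univ, true_and, Quotient.eq]
  constructor
  · intro h
    exact ⟨(cycLen_eq_of_sameCycle h).symm.trans hx, h.symm⟩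
  · rintro ⟨-, h⟩
    exact Equiv.Perm.SameCycle.symm h

/-! ### Counting marked tuples -/

/-- The points `x i` lie on pairwise distinct cycles of `σ`, of prescribed lengths `μ i`. -/
def Marks {m : ℕ} (σ : Equiv.Perm (Fin n)) (μ : Fin m → ℕ) (x : Fin m → Fin n) : Prop :=
  (∀ i, cycLen σ (x i) = μ i) ∧ ∀ i j, i ≠ j → ¬ σ.SameCycle (x i) (x j)

open Classical in
/-- The number of tuples of points lying on pairwise distinct cycles of `σ`, of prescribed
lengths `μ i`. -/
def markCount {m : ℕ} (μ : Fin m → ℕ) (σ : Equiv.Perm (Fin n)) : ℝ :=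
  ∑ x : Fin m → Fin n, if Marks σ μ x then 1 else 0

lemma Marks.injective {m : ℕ} {σ : Equiv.Perm (Fin n)} {μ : Fin m → ℕ} {x : Fin m → Fin n}
    (h : Marks σ μ x) : Function.Injective x := by
  intro i j hij
  by_contra hne
  exact h.2 i j hne (hij ▸ Equiv.Perm.SameCycle.refl _ _)

lemma marks_cons_iff {m : ℕ} (σ : Equiv.Perm (Fin n)) (ℓ : ℕ) (μ : Fin m → ℕ)
    (y : Fin n) (x : Fin m → Fin n) :
    Marks σ (Fin.cons ℓ μ : Fin (m + 1) → ℕ) (Fin.cons y x : Fin (m + 1) → Fin n) ↔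
      Marks σ μ x ∧ cycLen σ y = ℓ ∧ ∀ i, ¬ σ.SameCycle (x i) y := by
  constructor
  · rintro ⟨h1, h2⟩
    refine ⟨⟨fun i => by simpa using h1 i.succ, fun i j hij => ?_⟩, by simpa using h1 0,
      fun i => ?_⟩
    · simpa using h2 i.succ j.succ (by simpa using hij)
    · simpa using h2 i.succ 0 (Fin.succ_ne_zero i)
  · rintro ⟨⟨h1, h2⟩, h3, h4⟩
    refine ⟨fun i => ?_, fun i j => ?_⟩
    · cases i using Fin.cases with
      | zero => simpa using h3
      | succ i => simpa using h1 i
    · cases i using Fin.cases with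
      | zero =>
        cases j using Fin.cases with
        | zero => simp
        | succ j => simpa [Equiv.Perm.sameCycle_comm] using fun _ => h4 j
      | succ i =>
        cases j using Fin.cases with
        | zero => simpa using h4 i
        | succ j => simpa using h2 i j

open Classical in
/-- A marked tuple has `ℓ * (#_ℓ(σ) - #{i | μ i = ℓ})` extensions by one more point on an
`ℓ`-cycle: each of its entries with `μ i = ℓ` excludes a whole cycle, and these cycles are
disjoint. -/
lemma card_extensions {m : ℕ} {σ : Equiv.Perm (Fin n)} {μ : Fin m → ℕ} {x : Fin m → Fin n}
    (h : Marks σ μ x) (ℓ : ℕ) :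
    (Finset.univ.filter fun y => cycLen σ y = ℓ ∧ ∀ i, ¬ σ.SameCycle (x i) y).card
      + ℓ * (Finset.univ.filter fun i => μ i = ℓ).card = ℓ * cycCount σ ℓ := by
  rw [mul_cycCount, ← Finset.card_filter_add_card_filter_not
    (s := Finset.univ.filter fun y => cycLen σ y = ℓ) (fun y => ∀ i, ¬ σ.SameCycle (x i) y),
    Finset.filter_filter]
  congr 1
  have : (Finset.univ.filter fun y => cycLen σ y = ℓ).filter
      (fun y => ¬ ∀ i, ¬ σ.SameCycle (x i) y) =
      (Finset.univ.filter fun i => μ i = ℓ).biUnion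
        fun i => Finset.univ.filter fun y => σ.SameCycle (x i) y := by
    ext y
    simp only [Finset.mem_filter, Finset.mem_univ, true_and, Finset.mem_biUnion, not_forall,
      not_not]
    constructor
    · rintro ⟨hy, i, hi⟩
      exact ⟨i, by rw [← h.1 i, cycLen_eq_of_sameCycle hi, hy], hi⟩
    · rintro ⟨i, hμ, hi⟩
      exact ⟨by rw [← cycLen_eq_of_sameCycle hi, h.1 i, hμ], i, hi⟩
  rw [this, Finset.card_biUnion]
  · have : ∀ i ∈ Finset.univ.filter (fun i => μ i = ℓ),
        (Finset.univ.filter fun y => σ.SameCycle (x i) y).card = ℓ := by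
      intro i hi
      rw [card_sameCycle, h.1 i]
      simpa using hi
    rw [Finset.sum_congr rfl this, Finset.sum_const, smul_eq_mul, mul_comm]
  · intro i _ j _ hij
    rw [Function.onFun, Finset.disjoint_left]
    intro y hi hj
    simp only [Finset.mem_filter, Finset.mem_univ, true_and] at hi hj
    exact h.2 i j hij (hi.trans hj.symm)

open Classical in
lemma markCount_cons {m : ℕ} (ℓ : ℕ) (μ : Fin m → ℕ) (σ : Equiv.Perm (Fin n)) :
    markCount (Fin.cons ℓ μ : Fin (m + 1) → ℕ) σ =
      ℓ * (cycCount σ ℓ - (Finset.univ.filter fun i => μ i = ℓ).card) * markCount μ σ := by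
  unfold markCount
  rw [← Equiv.sum_comp (Fin.consEquiv fun _ => Fin n), Fintype.sum_prod_type_right,
    Finset.mul_sum]
  refine Finset.sum_congr rfl fun x _ => ?_
  have hc : ∀ y : Fin n, (Fin.consEquiv fun _ => Fin n) (y, x) = Fin.cons y x := fun _ => rfl
  simp only [hc, marks_cons_iff]
  by_cases h : Marks σ μ x
  · have := card_extensions h ℓ
    simp only [h, true_and, if_true, mul_one]
    rw [Finset.sum_boole]
    have h2 : ((Finset.univ.filter fun y => cycLen σ y = ℓ ∧
        ∀ i, ¬ σ.SameCycle (x i) y).card : ℝ)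
        + ℓ * (Finset.univ.filter fun i => μ i = ℓ).card = ℓ * cycCount σ ℓ := by
      exact_mod_cast this
    linarith
  · simp [h]

lemma markCount_elim0 (μ : Fin 0 → ℕ) (σ : Equiv.Perm (Fin n)) : markCount μ σ = 1 := by
  simp [markCount, Marks]

lemma markCount_comp_perm {m : ℕ} (μ : Fin m → ℕ) (π : Equiv.Perm (Fin m))
    (σ : Equiv.Perm (Fin n)) : markCount (μ ∘ π) σ = markCount μ σ := by
  classical
  unfold markCount
  refine Fintype.sum_equiv (Equiv.arrowCongr π (Equiv.refl _)) _ _ fun x => ?_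
  congr 1
  apply propext
  simp only [Marks, Equiv.arrowCongr_apply, Function.comp_apply, Equiv.refl_apply]
  constructor
  · rintro ⟨h1, h2⟩
    exact ⟨fun i => by simpa using h1 (π.symm i), fun i j hij => h2 _ _ (by simpa using hij)⟩
  · rintro ⟨h1, h2⟩
    refine ⟨fun i => by simpa using h1 (π i), fun i j hij => ?_⟩
    simpa using h2 (π i) (π j) (by simpa using hij)

/-! ### Conjugation invariance -/

lemma marks_conj {m : ℕ} (σ τ : Equiv.Perm (Fin n)) (μ : Fin m → ℕ) (x : Fin m → Fin n) :
    Marks (τ⁻¹ * σ * τ) μ x ↔ Marks σ μ (τ ∘ x) := by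
  simp only [Marks, cycLen_conj, sameCycle_conj_iff, Function.comp_apply]

lemma mem_Aset_iff {m : ℕ} (hmn : m ≤ n) (μ : Fin m → ℕ) (σ : Equiv.Perm (Fin n)) :
    σ ∈ Aset μ ↔ Marks σ μ (Fin.castLE hmn) := by
  constructor
  · rintro ⟨h1, h2⟩
    exact ⟨fun i => h1 i (i.2.trans_le hmn),
      fun i j hij => h2 i j hij (i.2.trans_le hmn) (j.2.trans_le hmn)⟩
  · rintro ⟨h1, h2⟩
    exact ⟨fun i _ => h1 i, fun i j hij _ _ => h2 i j hij⟩

open Classical in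
/-- Under a conjugation invariant law, every injective tuple is marked with the same
probability as `(1, …, m)`. -/
lemma sum_marks_eq_prob {m : ℕ} (hmn : m ≤ n) (p : Equiv.Perm (Fin n) → ℝ)
    (hp : ∀ τ σ : Equiv.Perm (Fin n), p (τ⁻¹ * σ * τ) = p σ) (μ : Fin m → ℕ)
    (x : Fin m ↪ Fin n) :
    ∑ σ, p σ * (if Marks σ μ x then 1 else 0) = prob p (Aset μ) := by
  have := Equiv.Perm.isMultiplyPretransitive (Fin n) m
  obtain ⟨τ, hτ⟩ := MulAction.exists_smul_eq (Equiv.Perm (Fin n)) (Fin.castLEEmb hmn) x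
  have hx : (x : Fin m → Fin n) = τ ∘ Fin.castLE hmn := by
    rw [← hτ]
    rfl
  unfold prob
  refine Fintype.sum_equiv (MulAut.conj τ⁻¹).toEquiv _ _ fun σ => ?_
  have hc : (MulAut.conj τ⁻¹).toEquiv σ = τ⁻¹ * σ * τ := by simp
  rw [hc, Set.indicator_apply, hp, mem_Aset_iff hmn, marks_conj, ← hx]
  simp

/-- Double counting: the expected number of marked tuples is the number of injective tuples
times the probability of `A^μ`. -/
lemma sum_markCount_eq {m : ℕ} (hmn : m ≤ n) (p : Equiv.Perm (Fin n) → ℝ)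
    (hp : ∀ τ σ : Equiv.Perm (Fin n), p (τ⁻¹ * σ * τ) = p σ) (μ : Fin m → ℕ) :
    ∑ σ, p σ * markCount μ σ = n.descFactorial m * prob p (Aset μ) := by
  classical
  have h1 : ∀ σ : Equiv.Perm (Fin n), markCount μ σ =
      ∑ x : Fin m ↪ Fin n, if Marks σ μ x then (1 : ℝ) else 0 := by
    intro σ
    unfold markCount
    refine (Finset.sum_of_injOn (fun x : Fin m ↪ Fin n => (x : Fin m → Fin n))
      (fun _ _ _ _ h => DFunLike.coe_injective h) (by simp) (fun x _ hx => ?_)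
      (fun _ _ => rfl)).symm
    refine if_neg fun h => hx ?_
    exact ⟨⟨x, h.injective⟩, by simp, rfl⟩
  simp only [h1, Finset.mul_sum]
  rw [Finset.sum_comm]
  simp only [sum_marks_eq_prob hmn p hp]
  rw [Finset.sum_const, Finset.card_univ, Fintype.card_embedding_eq]
  simp

end Cycles

/-! ### Convergence of expectations -/

/-- Sequences of real functionals of permutations, an algebra under pointwise operations. -/
abbrev PermFun : Type := (n : ℕ) → Equiv.Perm (Fin n) → ℝ

/-- The expectation of the functional `f` under the sequence of laws `p`. -/
def expect (p f : PermFun) (n : ℕ) : ℝ := ∑ σ, p n σ * f n σ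

/-- The functionals whose expectations under `p` and under `q` converge to a common limit. -/
def commonLimit (p q : PermFun) : Submodule ℝ PermFun where
  carrier := {f | ∃ L : ℝ, Tendsto (expect p f) atTop (nhds L) ∧
    Tendsto (expect q f) atTop (nhds L)}
  add_mem' := by
    rintro f g ⟨L, hp, hq⟩ ⟨M, hp', hq'⟩
    have key : ∀ r : PermFun, expect r (f + g) = fun n => expect r f n + expect r g n := by
      intro r
      funext n
      simp [expect, mul_add, Finset.sum_add_distrib]
    exact ⟨L + M, by rw [key]; exact hp.add hp', by rw [key]; exact hq.add hq'⟩
  zero_mem' := by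
    have key : ∀ r : PermFun, expect r 0 = fun _ => 0 := by
      intro r
      funext n
      simp [expect]
    exact ⟨0, by rw [key]; exact tendsto_const_nhds, by rw [key]; exact tendsto_const_nhds⟩
  smul_mem' := by
    rintro c f ⟨L, hp, hq⟩
    have key : ∀ r : PermFun, expect r (c • f) = fun n => c * expect r f n := by
      intro r
      funext n
      simp only [expect, Pi.smul_apply, smul_eq_mul, Finset.mul_sum]
      exact Finset.sum_congr rfl fun _ _ => by ring
    exact ⟨c * L, by rw [key]; exact hp.const_mul c, by rw [key]; exact hq.const_mul c⟩

lemma tendsto_prob_iff {m : ℕ} (μ : Fin m → ℕ) (p : PermFun)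
    (hp : ∀ n (τ σ : Equiv.Perm (Fin n)), p n (τ⁻¹ * σ * τ) = p n σ) (L : ℝ) :
    Tendsto (fun n : ℕ => (n : ℝ) ^ m * prob (p n) (Aset μ)) atTop (nhds L) ↔
      Tendsto (expect p fun _ => markCount μ) atTop (nhds L) := by
  have h1 : (expect p fun _ => markCount μ) =ᶠ[atTop]
      fun n : ℕ => (n.descFactorial m : ℝ) * prob (p n) (Aset μ) := by
    filter_upwards [eventually_ge_atTop m] with n hn
    exact sum_markCount_eq hn (p n) (hp n) μ
  rw [tendsto_congr' h1]
  exact ((isEquivalent_descFactorial m).symm.mul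
    (Asymptotics.IsEquivalent.refl (u := fun n => prob (p n) (Aset μ)))).tendsto_nhds_iff

/-! ### The two spanning families -/

/-- The functional `#_ℓ`. -/
def cycFun (ℓ : ℕ) : PermFun := fun _ σ => cycCount σ ℓ

/-- The marked tuple counts with positive prescribed lengths. -/
def markSet : Set PermFun :=
  {f | ∃ (m : ℕ) (μ : Fin m → ℕ), (∀ i, 1 ≤ μ i) ∧ f = fun _ => markCount μ}

/-- The algebra of polynomials in the cycle counts `#_1, #_2, …`. -/
def cycAlg : Subalgebra ℝ PermFun := Algebra.adjoin ℝ (Set.range fun i : ℕ => cycFun (i + 1))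

open Classical in
lemma markCount_cons_fun {m : ℕ} (ℓ : ℕ) (μ : Fin m → ℕ) :
    (fun _ => markCount (Fin.cons ℓ μ : Fin (m + 1) → ℕ) : PermFun) =
      (ℓ : ℝ) • (cycFun ℓ * (fun _ => markCount μ : PermFun) -
        ((Finset.univ.filter fun i => μ i = ℓ).card : ℝ) • (fun _ => markCount μ : PermFun)) := by
  funext n σ
  simp only [Pi.smul_apply, Pi.sub_apply, Pi.mul_apply, smul_eq_mul, markCount_cons, cycFun]
  ring

lemma markCount_mem_cycAlg {m : ℕ} (μ : Fin m → ℕ) :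
    (∀ i, 1 ≤ μ i) → (fun _ => markCount μ : PermFun) ∈ cycAlg := by
  classical
  induction μ using Fin.consInduction with
  | elim0 =>
    intro _
    convert cycAlg.one_mem using 1
    funext n σ
    exact markCount_elim0 _ σ
  | cons ℓ μ ih =>
    intro h
    have hμ := ih fun i => by simpa using h i.succ
    have hℓ : 1 ≤ ℓ := by simpa using h 0
    rw [markCount_cons_fun]
    refine cycAlg.smul_mem (cycAlg.sub_mem (cycAlg.mul_mem ?_ hμ) (cycAlg.smul_mem hμ _)) _
    exact Algebra.subset_adjoin ⟨ℓ - 1, by simp [Nat.sub_add_cancel hℓ]⟩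

/-- The recursion of `markCount_cons`, solved for `#_ℓ` times a marked tuple count. -/
lemma cycFun_mul_mem_span {ℓ : ℕ} (hℓ : 1 ≤ ℓ) {f : PermFun}
    (hf : f ∈ Submodule.span ℝ markSet) : cycFun ℓ * f ∈ Submodule.span ℝ markSet := by
  classical
  induction hf using Submodule.span_induction with
  | zero => simp
  | add f g _ _ hf hg => rw [mul_add]; exact add_mem hf hg
  | smul c f _ hf => rw [mul_smul_comm]; exact Submodule.smul_mem _ c hf
  | mem f hf =>
    obtain ⟨m, μ, hμ, rfl⟩ := hf
    have hℓ0 : (ℓ : ℝ) ≠ 0 := by positivity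
    have key : cycFun ℓ * (fun _ => markCount μ : PermFun) =
        (ℓ : ℝ)⁻¹ • (fun _ => markCount (Fin.cons ℓ μ : Fin (m + 1) → ℕ) : PermFun) +
        ((Finset.univ.filter fun i => μ i = ℓ).card : ℝ) •
          (fun _ => markCount μ : PermFun) := by
      rw [markCount_cons_fun, smul_smul, inv_mul_cancel₀ hℓ0, one_smul, sub_add_cancel]
    rw [key]
    refine add_mem (Submodule.smul_mem _ _ (Submodule.subset_span ⟨m + 1, _, ?_, rfl⟩))
      (Submodule.smul_mem _ _ (Submodule.subset_span ⟨m, μ, hμ, rfl⟩))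
    intro i
    cases i using Fin.cases with
    | zero => simpa using hℓ
    | succ i => simpa using hμ i

/-- The multipliers preserving the span of the marked tuple counts form a subalgebra
containing every `#_ℓ`. -/
lemma cycAlg_le_span : Subalgebra.toSubmodule cycAlg ≤ Submodule.span ℝ markSet := by
  intro f hf
  replace hf : f ∈ Algebra.adjoin ℝ (Set.range fun i : ℕ => cycFun (i + 1)) := hf
  have h1 : (1 : PermFun) ∈ Submodule.span ℝ markSet := by
    refine Submodule.subset_span ⟨0, Fin.elim0, fun i => i.elim0, ?_⟩
    funext n σ
    exact (markCount_elim0 _ σ).symm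
  suffices h : ∀ g ∈ Submodule.span ℝ markSet, f * g ∈ Submodule.span ℝ markSet by
    simpa using h 1 h1
  clear h1
  induction hf using Algebra.adjoin_induction with
  | mem f hf =>
    obtain ⟨i, rfl⟩ := hf
    exact fun g hg => cycFun_mul_mem_span (Nat.succ_pos i) hg
  | algebraMap r =>
    intro g hg
    rw [← Algebra.smul_def]
    exact Submodule.smul_mem _ r hg
  | add a b _ _ ha hb =>
    intro g hg
    rw [add_mul]
    exact add_mem (ha g hg) (hb g hg)
  | mul a b _ _ ha hb =>
    intro g hg
    rw [mul_assoc]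
    exact ha _ (hb g hg)

lemma span_markSet : Submodule.span ℝ markSet = Subalgebra.toSubmodule cycAlg := by
  refine le_antisymm (Submodule.span_le.2 ?_) cycAlg_le_span
  rintro f ⟨m, μ, hμ, rfl⟩
  exact markCount_mem_cycAlg μ hμ

/-- The monomial functional `∏ #_{i+1} ^ e i`. -/
def cycMonomial {d : ℕ} (e : Fin d → ℕ) : PermFun :=
  fun _ σ => ∏ i : Fin d, (cycCount σ (i + 1) : ℝ) ^ (e i)

lemma cycMonomial_eq {d : ℕ} (e : Fin d → ℕ) :
    cycMonomial e = ∏ i : Fin d, cycFun (i + 1) ^ e i := by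
  funext n σ
  simp [cycMonomial, cycFun, Finset.prod_apply]

lemma cycMonomial_mem_cycAlg {d : ℕ} (e : Fin d → ℕ) : cycMonomial e ∈ cycAlg := by
  rw [cycMonomial_eq]
  exact cycAlg.prod_mem fun i _ => cycAlg.pow_mem (Algebra.subset_adjoin ⟨i, rfl⟩) _

lemma exists_cycMonomial {f : PermFun}
    (hf : f ∈ Submonoid.closure (Set.range fun i : ℕ => cycFun (i + 1))) :
    ∃ (d : ℕ) (e : Fin d → ℕ), 1 ≤ d ∧ f = cycMonomial e := by
  have : ∃ e : ℕ →₀ ℕ, f = e.prod fun i k => cycFun (i + 1) ^ k := by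
    induction hf using Submonoid.closure_induction with
    | mem f hf =>
      obtain ⟨i, rfl⟩ := hf
      exact ⟨Finsupp.single i 1, by simp⟩
    | one => exact ⟨0, by simp⟩
    | mul f g _ _ hf hg =>
      obtain ⟨e, rfl⟩ := hf
      obtain ⟨e', rfl⟩ := hg
      exact ⟨e + e', (Finsupp.prod_add_index' (by simp) (by simp [pow_add])).symm⟩
  obtain ⟨e, rfl⟩ := this
  refine ⟨e.support.sup id + 1, fun i => e i, by omega, ?_⟩
  rw [cycMonomial_eq, Finsupp.prod_of_support_subset e (s := Finset.range (e.support.sup id + 1))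
    _ _ (by simp), Finset.prod_range]
  intro i hi
  have := Finset.le_sup (f := id) hi
  simp only [id] at this
  simpa using Nat.lt_succ_of_le this

/-- Lemma (expectation–probability conversion): for two sequences of
conjugation-invariant random permutations `σ_n` (law `p n`) and `ρ_n` (law `q n`), the
following are equivalent: (1) for every Young diagram `μ`, the limits
`lim n^{ℓ(μ)} P(σ_n ∈ A^μ)` and `lim n^{ℓ(μ)} P(ρ_n ∈ A^μ)` exist and coincide;
(2) for every `d' ≥ 1` and every monomial `P` in `d'` variables, the limits
`lim E(P(#_1 σ_n, …, #_{d'} σ_n))` and `lim E(P(#_1 ρ_n, …, #_{d'} ρ_n))` exist and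
coincide. -/
theorem expectation_probability_conversion
    (p q : (n : ℕ) → Equiv.Perm (Fin n) → ℝ)
    (hppos : ∀ n σ, 0 ≤ p n σ) (hpsum : ∀ n, ∑ σ, p n σ = 1)
    (hpconj : ∀ n (τ σ : Equiv.Perm (Fin n)), p n (τ⁻¹ * σ * τ) = p n σ)
    (hqpos : ∀ n σ, 0 ≤ q n σ) (hqsum : ∀ n, ∑ σ, q n σ = 1)
    (hqconj : ∀ n (τ σ : Equiv.Perm (Fin n)), q n (τ⁻¹ * σ * τ) = q n σ) :
    (∀ (m : ℕ) (μ : Fin m → ℕ), (∀ i, 1 ≤ μ i) → Antitone μ →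
      ∃ L : ℝ,
        Tendsto (fun n : ℕ => (n : ℝ) ^ m * prob (p n) (Aset μ)) atTop (nhds L) ∧
        Tendsto (fun n : ℕ => (n : ℝ) ^ m * prob (q n) (Aset μ)) atTop (nhds L))
    ↔
    (∀ d' : ℕ, 1 ≤ d' → ∀ e : Fin d' → ℕ,
      ∃ L : ℝ,
        Tendsto (fun n : ℕ =>
            ∑ σ : Equiv.Perm (Fin n), p n σ * ∏ i : Fin d', (cycCount σ (i + 1) : ℝ) ^ (e i))
          atTop (nhds L) ∧
        Tendsto (fun n : ℕ =>
            ∑ σ : Equiv.Perm (Fin n), q n σ * ∏ i : Fin d', (cycCount σ (i + 1) : ℝ) ^ (e i))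
          atTop (nhds L)) := by
  have hmark : (∀ (m : ℕ) (μ : Fin m → ℕ), (∀ i, 1 ≤ μ i) → Antitone μ →
      ∃ L : ℝ,
        Tendsto (fun n : ℕ => (n : ℝ) ^ m * prob (p n) (Aset μ)) atTop (nhds L) ∧
        Tendsto (fun n : ℕ => (n : ℝ) ^ m * prob (q n) (Aset μ)) atTop (nhds L))
      ↔ Submodule.span ℝ markSet ≤ commonLimit p q := by
    simp only [tendsto_prob_iff _ p hpconj, tendsto_prob_iff _ q hqconj]
    rw [Submodule.span_le]
    constructor
    · rintro h f ⟨m, μ, hμ, rfl⟩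
      -- Sorting `μ` into a Young diagram does not change the count.
      let π : Equiv.Perm (Fin m) := Tuple.sort (OrderDual.toDual ∘ μ)
      have hanti : Antitone (μ ∘ π) := fun i j hij =>
        Tuple.monotone_sort (OrderDual.toDual ∘ μ) hij
      have hπ : (fun _ => markCount μ : PermFun) = fun _ => markCount (μ ∘ π) := by
        funext n σ
        exact (markCount_comp_perm μ π σ).symm
      rw [hπ]
      exact h m (μ ∘ π) (fun i => hμ _) hanti
    · intro h m μ hμ _
      exact h ⟨m, μ, hμ, rfl⟩
  rw [hmark, span_markSet]
  constructor
  · intro h d _ e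
    exact h (cycMonomial_mem_cycAlg e)
  · intro h
    rw [cycAlg, Algebra.adjoin_eq_span, Submodule.span_le]
    intro f hf
    obtain ⟨d, e, hd, rfl⟩ := exists_cycMonomial hf
    exact h d hd e
end
end

section
/- Let Ω ∈ F_k be a word that is not a proper power, whose canonical reduced form Ω = x_{k_t}^{ε_t}⋯x_{k_1}^{ε_1} satisfies k_1 ≠ k_t. For each n, let ρ_{1,n}, …, ρ_{k,n} be independent uniformly distributed permutations of {1,…,n}. Then for every Young diagram μ: lim_{n→∞} n^{ℓ(μ)} · P(Ω(ρ_{1,n},…,ρ_{k,n}) ∈ A^{μ}) = 1. -/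
/-! The event is decomposed according to the full trajectories of the points `1, …, m`. Since the word
`Ω`, of length `t`, is read `μ i` times along the cycle of `i`, a trajectory is a placement
`f : P → Fin n` of the set `P` of positions along `m` labelled closed walks of lengths `μ i * t`, with
prescribed base points and with distinct values at the positions where a new reading of `Ω` starts.
For each tuple of permutations in the event exactly one such placement is compatible with it
(`mem_Aset_iff`, `compat_unique`), so the probability of the event is the sum over placements of the
probability `wt` of compatibility.

Compatibility with `f` prescribes the permutations along the edges of the image graph of `f`. If this
graph has `E` edges, the probability is either zero or a product of inverse falling factorials,
of order `n ^ (-E)` (`wt_eq`, `wt_le`). If it has `V` vertices, there are `O(n ^ (V - m))` placements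
with that many values (`card_based_image`).

* Injective placements have `V = E = |P|`. There are `n ^ (|P| - m) (1 + o(1))` of them, so together
  they contribute `n ^ (-m) (1 + o(1))`.
* Non-injective placements satisfy `V + 1 ≤ E` (`euler`) and contribute `O(n ^ (-m - 1))`. As `Ω` is
  cyclically reduced, every vertex has degree at least two, so `V ≤ E`. In the case of equality the
  graph is a union of cycles, and two walks that meet run together for ever, in the same or in
  opposite directions (`rigid`). In the same direction, since `Ω` is not a proper power, the walks
  are synchronized (`eq_of_shift_eq`), and the distinctness of starting positions shows that they
  agree. Opposite directions would make `Ω` a cyclic rotation of its inverse, which is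
  impossible for a cyclically reduced word (`not_inverse`).
-/

open Filter

noncomputable section

namespace WordPerm

set_option linter.unusedSectionVars false

/-! ### Labelled closed walks and their images -/

/-- The inverse letter. -/
def flip {k : ℕ} (x : Fin k × Bool) : Fin k × Bool := (x.1, !x.2)

@[simp] lemma flip_flip {k : ℕ} (x : Fin k × Bool) : flip (flip x) = x := by
  simp [flip]

lemma perm_apply_inv {P : Type*} (s : Equiv.Perm P) (p : P) : s (s⁻¹ p) = p :=
  s.apply_symm_apply p

lemma perm_inv_apply {P : Type*} (s : Equiv.Perm P) (p : P) : s⁻¹ (s p) = p :=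
  s.symm_apply_apply p

/-- The permutation by which a letter acts, given values of the generators. -/
def act {k : ℕ} {α : Type*} (ρ : Fin k → Equiv.Perm α) (x : Fin k × Bool) : Equiv.Perm α :=
  bif x.2 then ρ x.1 else (ρ x.1)⁻¹

lemma act_flip {k : ℕ} {α : Type*} (ρ : Fin k → Equiv.Perm α) (x : Fin k × Bool) :
    act ρ (flip x) = (act ρ x)⁻¹ := by
  rcases x with ⟨a, b⟩
  cases b <;> simp [act, flip]

/-- A position `p ∈ P` carries the letter `ℓ p`, read on the step from `p` to `s p`. The tuple `ρ`
is compatible with the placement `f` of positions if every step of `f` is the action of the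
corresponding letter. -/
def Compat {k : ℕ} {P α : Type*} (s : Equiv.Perm P) (ℓ : P → Fin k × Bool)
    (ρ : Fin k → Equiv.Perm α) (f : P → α) : Prop :=
  ∀ p, act ρ (ℓ p) (f p) = f (s p)

/-- The source of the step at `p`, once oriented along the generator (not its inverse). -/
def src {k : ℕ} {P : Type*} (s : Equiv.Perm P) (ℓ : P → Fin k × Bool) (p : P) : P :=
  bif (ℓ p).2 then p else s p

/-- The target of the step at `p`, once oriented along the generator (not its inverse). -/
def tgt {k : ℕ} {P : Type*} (s : Equiv.Perm P) (ℓ : P → Fin k × Bool) (p : P) : P :=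
  bif (ℓ p).2 then s p else p

section comb

variable {k : ℕ} {P α : Type*} {s : Equiv.Perm P} {ℓ : P → Fin k × Bool}

lemma compat_iff {ρ : Fin k → Equiv.Perm α} {f : P → α} :
    Compat s ℓ ρ f ↔ ∀ p, ρ (ℓ p).1 (f (src s ℓ p)) = f (tgt s ℓ p) := by
  refine forall_congr' fun p => ?_
  rcases h : ℓ p with ⟨a, b⟩
  cases b
  · simp only [act, src, tgt, h, cond_false, Equiv.Perm.inv_eq_iff_eq]
    exact eq_comm
  · simp [act, src, tgt, h]

lemma Compat.step_back {ρ : Fin k → Equiv.Perm α} {f : P → α} (h : Compat s ℓ ρ f) (p : P) :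
    act ρ (flip (ℓ (s⁻¹ p))) (f p) = f (s⁻¹ p) := by
  have := h (s⁻¹ p)
  rw [perm_apply_inv] at this
  rw [act_flip, ← this, perm_inv_apply]

/-- If any two positions with the same image leave it by the same letter, or the second leaves it
by the inverse of the letter arriving at the first, then the walks through the two positions follow
each other for ever, in the same or in opposite directions; the hypotheses on the labels then
force the positions to agree. -/
lemma rigid {ρ : Fin k → Equiv.Perm α} {f : P → α} {St : Set P}
    (h1 : ∀ p, ℓ (s p) ≠ flip (ℓ p))
    (h2 : ∀ p q, (∀ n : ℕ, ℓ ((s ^ n) p) = ℓ ((s ^ n) q)) →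
      ∃ n : ℕ, (s ^ n) p ∈ St ∧ (s ^ n) q ∈ St)
    (h3 : ∀ p q, ¬ ∀ n : ℕ, ℓ ((s ^ n) p) = flip (ℓ ((s⁻¹ ^ (n + 1)) q)))
    (hc : Compat s ℓ ρ f) (hSt : Set.InjOn f St)
    (hf : ∀ p q, f p = f q → ℓ q = ℓ p ∨ ℓ q = flip (ℓ (s⁻¹ p))) :
    Function.Injective f := by
  intro p q hpq
  rcases hf p q hpq with h | h
  · have key : ∀ n : ℕ, f ((s ^ n) p) = f ((s ^ n) q) ∧ ℓ ((s ^ n) q) = ℓ ((s ^ n) p) := by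
      intro n
      induction n with
      | zero => exact ⟨hpq, h⟩
      | succ n ih =>
        obtain ⟨i1, i2⟩ := ih
        rw [pow_succ', Equiv.Perm.mul_apply, Equiv.Perm.mul_apply]
        have e : f (s ((s ^ n) p)) = f (s ((s ^ n) q)) := by
          rw [← hc, ← hc, i1, i2]
        refine ⟨e, (hf _ _ e).resolve_right fun h' => ?_⟩
        rw [perm_inv_apply, ← i2] at h'
        exact h1 _ h'
    obtain ⟨n, hp, hq⟩ := h2 p q fun n => (key n).2.symm
    exact (s ^ n).injective (hSt hp hq (key n).1)
  · exfalso
    have key : ∀ n : ℕ, f ((s⁻¹ ^ n) p) = f ((s ^ n) q) ∧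
        ℓ ((s ^ n) q) = flip (ℓ ((s⁻¹ ^ (n + 1)) p)) := by
      intro n
      induction n with
      | zero => exact ⟨hpq, by simpa using h⟩
      | succ n ih =>
        obtain ⟨i1, i2⟩ := ih
        have e : f ((s⁻¹ ^ (n + 1)) p) = f ((s ^ (n + 1)) q) := by
          rw [pow_succ' s, Equiv.Perm.mul_apply, ← hc, i2, ← i1, pow_succ' s⁻¹,
            Equiv.Perm.mul_apply, hc.step_back]
        refine ⟨e, ?_⟩
        rcases hf _ _ e with h' | h'
        · rw [pow_succ' s, Equiv.Perm.mul_apply] at h'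
          exact absurd (by rw [i2, flip_flip]; exact h') (h1 ((s ^ n) q))
        · rw [h', pow_succ' s⁻¹ (n + 1), Equiv.Perm.mul_apply]
    exact h3 q p fun n => (key n).2

/-- A collision would make two consecutive letters inverse to each other. -/
lemma src_injOn (h1 : ∀ p, ℓ (s p) ≠ flip (ℓ p)) (a : Fin k) :
    Set.InjOn (src s ℓ) {p | (ℓ p).1 = a} := by
  intro p hp q hq h
  have hp' : (ℓ p).1 = a := hp
  have hq' : (ℓ q).1 = a := hq
  simp only [src] at h
  cases hb : (ℓ p).2 <;> cases hb' : (ℓ q).2 <;>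
    simp only [hb, hb', cond_true, cond_false] at h
  · exact s.injective h
  · exact absurd (by rw [h]; ext <;> simp [flip, hb, hb', hp', hq']) (h1 p)
  · exact absurd (by rw [← h]; ext <;> simp [flip, hb, hb', hp', hq']) (h1 q)
  · exact h

lemma tgt_injOn (h1 : ∀ p, ℓ (s p) ≠ flip (ℓ p)) (a : Fin k) :
    Set.InjOn (tgt s ℓ) {p | (ℓ p).1 = a} := by
  intro p hp q hq h
  have hp' : (ℓ p).1 = a := hp
  have hq' : (ℓ q).1 = a := hq
  simp only [tgt] at h
  cases hb : (ℓ p).2 <;> cases hb' : (ℓ q).2 <;>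
    simp only [hb, hb', cond_true, cond_false] at h
  · exact h
  · exact absurd (by rw [← h]; ext <;> simp [flip, hb, hb', hp', hq']) (h1 q)
  · exact absurd (by rw [h]; ext <;> simp [flip, hb, hb', hp', hq']) (h1 p)
  · exact s.injective h

variable [Fintype P] [DecidableEq α]

variable (s ℓ) in
/-- The points at which compatibility with `f` prescribes the value of the `a`-th permutation. -/
def dom (f : P → α) (a : Fin k) : Finset α :=
  (Finset.univ.filter fun p => (ℓ p).1 = a).image fun p => f (src s ℓ p)

lemma src_mem_dom (f : P → α) (p : P) : f (src s ℓ p) ∈ dom s ℓ f (ℓ p).1 :=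
  Finset.mem_image.2 ⟨p, by simp, rfl⟩

/-- The edge of the image graph given by the step at `p` leaves `f p` and enters `f (s p)`: one of
these is in the domain of the prescribed partial injection and the other in its range. -/
lemma half_edge {ρ : Fin k → Equiv.Perm α} {f : P → α} (hc : Compat s ℓ ρ f) (p : P) :
    (bif (ℓ p).2 then f p ∈ dom s ℓ f (ℓ p).1
      else f p ∈ (dom s ℓ f (ℓ p).1).image (ρ (ℓ p).1)) ∧
    (bif (ℓ p).2 then f (s p) ∈ (dom s ℓ f (ℓ p).1).image (ρ (ℓ p).1)
      else f (s p) ∈ dom s ℓ f (ℓ p).1) := by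
  have h := compat_iff.1 hc p
  have h' := src_mem_dom (s := s) (ℓ := ℓ) f p
  have h'' : f (tgt s ℓ p) ∈ (dom s ℓ f (ℓ p).1).image (ρ (ℓ p).1) :=
    Finset.mem_image.2 ⟨_, h', h⟩
  simp only [src, tgt] at h' h''
  cases hb : (ℓ p).2 <;> simp only [hb, cond_true, cond_false] at h' h'' ⊢
  · exact ⟨h'', h'⟩
  · exact ⟨h', h''⟩

/-- The Euler characteristic bound: a non-injective placement has an image graph with more edges
than vertices. Every vertex has degree at least two because the walks do not backtrack, and
by `rigid` some vertex has degree at least three. -/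
lemma euler [DecidableEq P] {ρ : Fin k → Equiv.Perm α} {f : P → α} {St : Set P}
    (h1 : ∀ p, ℓ (s p) ≠ flip (ℓ p))
    (h2 : ∀ p q, (∀ n : ℕ, ℓ ((s ^ n) p) = ℓ ((s ^ n) q)) →
      ∃ n : ℕ, (s ^ n) p ∈ St ∧ (s ^ n) q ∈ St)
    (h3 : ∀ p q, ¬ ∀ n : ℕ, ℓ ((s ^ n) p) = flip (ℓ ((s⁻¹ ^ (n + 1)) q)))
    (hc : Compat s ℓ ρ f) (hSt : Set.InjOn f St) (hf : ¬ Function.Injective f) :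
    (Finset.univ.image f).card + 1 ≤ ∑ a, (dom s ℓ f a).card := by
  classical
  -- `H` is the set of half-edges: the pairs of a vertex and a letter by which one can leave it.
  -- Each edge has one half-edge labelled by a generator and one labelled by its inverse.
  set H : Finset (α × (Fin k × Bool)) := Finset.univ.filter (fun x : (Fin k × Bool) => True)
    |>.biUnion fun x => ((bif x.2 then dom s ℓ f x.1 else (dom s ℓ f x.1).image (ρ x.1)).image
      fun v => (v, x)) with hH
  have memH : ∀ v x, (v, x) ∈ H ↔
      v ∈ (bif x.2 then dom s ℓ f x.1 else (dom s ℓ f x.1).image (ρ x.1)) := by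
    intro v x
    simp [hH]
  have out_mem : ∀ p, (f p, ℓ p) ∈ H := by
    intro p
    rw [memH]
    have := (half_edge hc p).1
    cases hb : (ℓ p).2 <;> simpa [hb] using this
  have in_mem : ∀ p, (f p, flip (ℓ (s⁻¹ p))) ∈ H := by
    intro p
    rw [memH]
    have := (half_edge hc (s⁻¹ p)).2
    rw [perm_apply_inv] at this
    generalize ℓ (s⁻¹ p) = x at this ⊢
    rcases x with ⟨a, b⟩
    cases b <;> simpa [flip] using this
  have out_ne_in : ∀ p, ℓ p ≠ flip (ℓ (s⁻¹ p)) := by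
    intro p
    have := h1 (s⁻¹ p)
    rwa [perm_apply_inv] at this
  have cardH : H.card ≤ 2 * ∑ a, (dom s ℓ f a).card := by
    refine Finset.card_biUnion_le.trans ?_
    rw [Finset.filter_true, ← Finset.univ_product_univ, Finset.sum_product, Finset.mul_sum]
    refine Finset.sum_le_sum fun a _ => ?_
    rw [Fintype.sum_bool, two_mul]
    exact add_le_add (Finset.card_image_le) (Finset.card_image_le.trans Finset.card_image_le)
  have fib2 : ∀ v ∈ Finset.univ.image f, 2 ≤ (H.filter fun y => y.1 = v).card := by
    intro v hv
    obtain ⟨p, -, rfl⟩ := Finset.mem_image.1 hv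
    rw [← Finset.card_pair (a := (f p, ℓ p)) (b := (f p, flip (ℓ (s⁻¹ p))))
      (by simpa using out_ne_in p)]
    refine Finset.card_le_card fun y hy => ?_
    rcases Finset.mem_insert.1 hy with rfl | hy
    · simp [out_mem]
    · rw [Finset.mem_singleton] at hy
      subst hy
      exact Finset.mem_filter.2 ⟨in_mem p, rfl⟩
  have hex : ∃ v ∈ Finset.univ.image f, 2 < (H.filter fun y => y.1 = v).card := by
    by_contra! hcon
    refine hf (rigid h1 h2 h3 hc hSt fun p q hpq => ?_)
    by_contra! hne
    have hle := hcon (f p) (by simp)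
    have : ({(f p, ℓ p), (f p, flip (ℓ (s⁻¹ p))), (f p, ℓ q)} : Finset _) ⊆
        H.filter fun y => y.1 = f p := by
      intro y hy
      simp only [Finset.mem_insert, Finset.mem_singleton] at hy
      rcases hy with rfl | rfl | rfl
      · simp [out_mem]
      · exact Finset.mem_filter.2 ⟨in_mem p, rfl⟩
      · simp only [Finset.mem_filter, and_true]
        rw [hpq]
        exact out_mem q
    have h3 := Finset.card_le_card this
    rw [Finset.card_eq_three.2 ⟨_, _, _, by simpa using out_ne_in p, by simpa using hne.1.symm,
      by simpa using hne.2.symm, rfl⟩] at h3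
    omega
  have hsum : ∑ v ∈ Finset.univ.image f, 2 < ∑ v ∈ Finset.univ.image f,
      (H.filter fun y => y.1 = v).card := Finset.sum_lt_sum fib2 hex
  have hsub : ∑ v ∈ Finset.univ.image f, (H.filter fun y => y.1 = v).card ≤ H.card := by
    rw [← Finset.card_biUnion]
    · exact Finset.card_le_card (by intro y; simp)
    · intro v _ w _ hvw
      refine Finset.disjoint_left.2 fun y hy hy' => hvw ?_
      rw [← (Finset.mem_filter.1 hy).2, (Finset.mem_filter.1 hy').2]
  rw [Finset.sum_const, smul_eq_mul] at hsum
  omega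

/-! ### Counting compatible tuples of permutations -/

lemma card_agree [Fintype α] (D : Finset α) (σ₀ : Equiv.Perm α) :
    (Finset.univ.filter fun σ : Equiv.Perm α => ∀ x ∈ D, σ x = σ₀ x).card
      = (Fintype.card α - D.card).factorial := by
  have e : {σ : Equiv.Perm α // ∀ x ∈ D, σ x = σ₀ x} ≃ Equiv.Perm {x // x ∉ D} :=
    (Equiv.subtypeEquiv (Equiv.mulLeft σ₀⁻¹) (fun σ => by
      refine forall_congr' fun x => ?_
      simp only [not_not, Equiv.coe_mulLeft, Equiv.Perm.mul_apply, Equiv.Perm.inv_eq_iff_eq])).trans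
      (Equiv.Perm.subtypeEquivSubtypePerm (fun x => x ∉ D)).symm
  rw [← Fintype.card_subtype, Fintype.card_congr e, Fintype.card_perm,
    Fintype.card_subtype_compl, Fintype.card_coe]

lemma card_compat [Fintype α] {ρ₀ : Fin k → Equiv.Perm α} {f : P → α}
    (h0 : Compat s ℓ ρ₀ f) [DecidablePred fun ρ : Fin k → Equiv.Perm α => Compat s ℓ ρ f] :
    (Finset.univ.filter fun ρ : Fin k → Equiv.Perm α => Compat s ℓ ρ f).card
      = ∏ a, (Fintype.card α - (dom s ℓ f a).card).factorial := by
  have : (Finset.univ.filter fun ρ : Fin k → Equiv.Perm α => Compat s ℓ ρ f) =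
      Fintype.piFinset fun a =>
        (Finset.univ.filter fun σ : Equiv.Perm α => ∀ x ∈ dom s ℓ f a, σ x = ρ₀ a x) := by
    ext ρ
    simp only [Finset.mem_filter, Finset.mem_univ, true_and, Fintype.mem_piFinset, dom,
      Finset.mem_image, forall_exists_index, and_imp]
    rw [compat_iff]
    rw [compat_iff] at h0
    constructor
    · rintro h a _ p rfl rfl
      rw [h, h0]
    · intro h p
      rw [h _ _ p rfl rfl, h0]
  rw [this, Fintype.card_piFinset]
  exact Finset.prod_congr rfl fun a _ => card_agree _ _

lemma sum_card_label [DecidableEq P] :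
    ∑ a, (Finset.univ.filter fun p : P => (ℓ p).1 = a).card = Fintype.card P := by
  rw [← Finset.card_univ]
  exact (Finset.card_eq_sum_card_fiberwise (fun p _ => Finset.mem_coe.2 (Finset.mem_univ _))).symm

lemma sum_card_dom_le [DecidableEq P] (f : P → α) :
    ∑ a, (dom s ℓ f a).card ≤ Fintype.card P := by
  rw [← sum_card_label (ℓ := ℓ)]
  exact Finset.sum_le_sum fun a _ => Finset.card_image_le

lemma card_dom_of_injective (h1 : ∀ p, ℓ (s p) ≠ flip (ℓ p)) {f : P → α}
    (hf : Function.Injective f) (a : Fin k) :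
    (dom s ℓ f a).card = (Finset.univ.filter fun p : P => (ℓ p).1 = a).card := by
  refine Finset.card_image_of_injOn fun p hp q hq h => src_injOn h1 a ?_ ?_ (hf h)
  · simpa using hp
  · simpa using hq

/-- An injective placement prescribes partial injections, which extend to permutations. -/
lemma exists_compat [Fintype α] (h1 : ∀ p, ℓ (s p) ≠ flip (ℓ p)) {f : P → α}
    (hf : Function.Injective f) : ∃ ρ : Fin k → Equiv.Perm α, Compat s ℓ ρ f := by
  have : ∀ a : Fin k, ∃ σ : Equiv.Perm α, ∀ p, (ℓ p).1 = a →
      σ (f (src s ℓ p)) = f (tgt s ℓ p) := by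
    intro a
    have i1 : Function.Injective fun p : {p // (ℓ p).1 = a} => f (src s ℓ p) := fun p q h =>
      Subtype.ext (src_injOn h1 a p.2 q.2 (hf h))
    have i2 : Function.Injective fun p : {p // (ℓ p).1 = a} => f (tgt s ℓ p) := fun p q h =>
      Subtype.ext (tgt_injOn h1 a p.2 q.2 (hf h))
    classical
    let e : {x // x ∈ Set.range fun p : {p // (ℓ p).1 = a} => f (src s ℓ p)} ≃
      {x // x ∈ Set.range fun p : {p // (ℓ p).1 = a} => f (tgt s ℓ p)} :=
      (Equiv.ofInjective _ i1).symm.trans (Equiv.ofInjective _ i2)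
    refine ⟨e.extendSubtype, fun p hp => ?_⟩
    rw [Equiv.extendSubtype_apply_of_mem e _ ⟨⟨p, hp⟩, rfl⟩]
    have := Equiv.ofInjective_symm_apply i1 ⟨p, hp⟩
    simp only [e, Equiv.trans_apply]
    rw [this]
    rfl
  choose ρ hρ using this
  exact ⟨ρ, compat_iff.2 fun p => hρ _ p rfl⟩

end comb

/-! ### Weighted counts of placements -/

section analytic

variable {k m : ℕ} {P α : Type*} {s : Equiv.Perm P} {ℓ : P → Fin k × Bool}
variable [Fintype P] [DecidableEq P] [Fintype α] [DecidableEq α]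

/-- The placements of `P` in `α` whose base points `b i` are sent to the given points `x i`. -/
def based (b : Fin m → P) (x : Fin m → α) : Finset (P → α) :=
  Finset.univ.filter fun f => ∀ i, f (b i) = x i

lemma card_based {b : Fin m → P} (hb : Function.Injective b) (x : Fin m → α) :
    (based b x).card * Fintype.card α ^ m = Fintype.card α ^ Fintype.card P := by
  classical
  have : based b x = Fintype.piFinset fun p =>
      if h : ∃ i, b i = p then {x h.choose} else Finset.univ := by
    ext f
    simp only [based, Finset.mem_filter, Finset.mem_univ, true_and, Fintype.mem_piFinset]
    constructor
    · intro h p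
      by_cases hp : ∃ i, b i = p
      · rw [dif_pos hp, Finset.mem_singleton, ← h, hp.choose_spec]
      · rw [dif_neg hp]
        exact Finset.mem_univ _
    · intro h i
      have h' := h (b i)
      have hi : ∃ j, b j = b i := ⟨i, rfl⟩
      rw [dif_pos hi, Finset.mem_singleton] at h'
      rw [h', hb hi.choose_spec]
  rw [this, Fintype.card_piFinset]
  have e : ∀ p, (if h : ∃ i, b i = p then {x h.choose} else (Finset.univ : Finset α)).card =
      if ∃ i, b i = p then 1 else Fintype.card α := by
    intro p
    split_ifs <;> simp
  rw [Finset.prod_congr rfl fun p _ => e p, Finset.prod_ite, Finset.prod_const_one, one_mul,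
    Finset.prod_const, ← pow_add]
  congr 1
  have h1 := Finset.card_filter_add_card_filter_not (s := (Finset.univ : Finset P))
    (fun p => ∃ i, b i = p)
  have h2 : (Finset.univ.filter fun p => ∃ i, b i = p).card = m := by
    have : (Finset.univ.filter fun p => ∃ i, b i = p) = Finset.univ.image b := by
      ext p
      simp
    rw [this, Finset.card_image_of_injective _ hb, Finset.card_univ, Fintype.card_fin]
  rw [Finset.card_univ] at h1
  omega

lemma image_based_subset {b : Fin m → P} {x : Fin m → α} {f : P → α} (hf : f ∈ based b x) :
    Finset.univ.image x ⊆ Finset.univ.image f := by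
  intro y hy
  obtain ⟨i, -, rfl⟩ := Finset.mem_image.1 hy
  exact Finset.mem_image.2 ⟨b i, Finset.mem_univ _, (Finset.mem_filter.1 hf).2 i⟩

/-- The image of a based placement with `V` values consists of the `m` base values and `V - m`
further ones. -/
lemma card_based_image (b : Fin m → P) {x : Fin m → α} (hx : Function.Injective x) (V : ℕ) :
    ((based b x).filter fun f => (Finset.univ.image f).card = V).card * Fintype.card α ^ m ≤
      V ^ Fintype.card P * Fintype.card α ^ V := by
  have hM : (Finset.univ.image x).card = m := by
    rw [Finset.card_image_of_injective _ hx, Finset.card_univ, Fintype.card_fin]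
  rcases Finset.eq_empty_or_nonempty
    ((based b x).filter fun f => (Finset.univ.image f).card = V) with h | ⟨f₀, hf₀⟩
  · rw [h]
    simp
  have hmV : m ≤ V := by
    obtain ⟨h1, h2⟩ := Finset.mem_filter.1 hf₀
    rw [← h2, ← hM]
    exact Finset.card_le_card (image_based_subset h1)
  have hsub : ((based b x).filter fun f => (Finset.univ.image f).card = V) ⊆
      (Finset.powersetCard (V - m) (Finset.univ : Finset α)).biUnion fun S =>
        Fintype.piFinset fun _ : P => S ∪ Finset.univ.image x := by
    intro f hf
    obtain ⟨h1, h2⟩ := Finset.mem_filter.1 hf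
    refine Finset.mem_biUnion.2 ⟨Finset.univ.image f \ Finset.univ.image x, ?_, ?_⟩
    · rw [Finset.mem_powersetCard]
      refine ⟨Finset.subset_univ _, ?_⟩
      rw [Finset.card_sdiff_of_subset (image_based_subset h1), h2, hM]
    · rw [Fintype.mem_piFinset]
      intro p
      rw [Finset.sdiff_union_of_subset (image_based_subset h1)]
      exact Finset.mem_image_of_mem _ (Finset.mem_univ _)
  have hle : ((based b x).filter fun f => (Finset.univ.image f).card = V).card ≤
      Fintype.card α ^ (V - m) * V ^ Fintype.card P := by
    refine (Finset.card_le_card hsub).trans ((Finset.card_biUnion_le_card_mul _ _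
      (V ^ Fintype.card P) fun S hS => ?_).trans ?_)
    · rw [Fintype.card_piFinset, Finset.prod_const, Finset.card_univ]
      refine Nat.pow_le_pow_left ((Finset.card_union_le _ _).trans ?_) _
      rw [hM, (Finset.mem_powersetCard.1 hS).2]
      omega
    · rw [Finset.card_powersetCard, Finset.card_univ]
      exact Nat.mul_le_mul_right _ (Nat.choose_le_pow _ _)
  calc _ ≤ Fintype.card α ^ (V - m) * V ^ Fintype.card P * Fintype.card α ^ m :=
        Nat.mul_le_mul_right _ hle
    _ = V ^ Fintype.card P * (Fintype.card α ^ (V - m) * Fintype.card α ^ m) := by ring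
    _ = _ := by rw [← pow_add, Nat.sub_add_cancel hmV]

/-- Weighting each placement by `n ^ (-V)`, where `V` is its number of values, the based placements
have total weight `O(n ^ (-m))`. -/
lemma sum_based_le (b : Fin m → P) {x : Fin m → α} (hx : Function.Injective x)
    (hn : 0 < Fintype.card α) :
    (Fintype.card α : ℝ) ^ m *
      ∑ f ∈ based b x, ((Fintype.card α : ℝ) ^ (Finset.univ.image f).card)⁻¹ ≤
      (Fintype.card P + 1) * (Fintype.card P : ℝ) ^ Fintype.card P := by
  have hn' : (0 : ℝ) < Fintype.card α := by exact_mod_cast hn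
  rw [← Finset.sum_fiberwise_of_maps_to (s := based b x)
    (t := Finset.range (Fintype.card P + 1)) (g := fun f => (Finset.univ.image f).card)
    (fun f _ => Finset.mem_range.2 (Nat.lt_succ_of_le
      (Finset.card_image_le.trans (Finset.card_univ).le))), Finset.mul_sum]
  have : ∀ V ∈ Finset.range (Fintype.card P + 1), (Fintype.card α : ℝ) ^ m *
      ∑ f ∈ based b x with (Finset.univ.image f).card = V,
        ((Fintype.card α : ℝ) ^ (Finset.univ.image f).card)⁻¹ ≤
      (Fintype.card P : ℝ) ^ Fintype.card P := by
    intro V hV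
    rw [Finset.sum_congr rfl (g := fun _ => ((Fintype.card α : ℝ) ^ V)⁻¹)
      (fun f hf => by rw [(Finset.mem_filter.1 hf).2]), Finset.sum_const, nsmul_eq_mul]
    have h := card_based_image b hx V
    have h' : (((based b x).filter fun f => (Finset.univ.image f).card = V).card : ℝ) *
        (Fintype.card α : ℝ) ^ m ≤ (V : ℝ) ^ Fintype.card P * (Fintype.card α : ℝ) ^ V := by
      exact_mod_cast h
    have hVP : (V : ℝ) ≤ Fintype.card P := by
      exact_mod_cast Nat.lt_succ_iff.1 (Finset.mem_range.1 hV)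
    rw [← mul_assoc, mul_comm (_ ^ m), ← div_eq_mul_inv, div_le_iff₀ (by positivity)]
    refine h'.trans ?_
    gcongr
  refine (Finset.sum_le_sum this).trans ?_
  rw [Finset.sum_const, Finset.card_range, nsmul_eq_mul]
  push_cast
  rfl

lemma card_image_lt {f : P → α} (hf : ¬ Function.Injective f) :
    (Finset.univ.image f).card + 1 ≤ Fintype.card P := by
  refine Nat.succ_le_of_lt (lt_of_le_of_ne (Finset.card_image_le.trans Finset.card_univ.le) ?_)
  intro h
  rw [← Finset.card_univ, Finset.card_image_iff] at h
  exact hf fun p q => h (by simp) (by simp)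

open Classical in
/-- Almost all based placements are injective. -/
lemma card_not_injective_le (b : Fin m → P) {x : Fin m → α} (hx : Function.Injective x)
    (hn : 0 < Fintype.card α) :
    (((based b x).filter fun f => ¬ Function.Injective f).card : ℝ) * (Fintype.card α : ℝ) ^ m /
      (Fintype.card α : ℝ) ^ Fintype.card P ≤
      (Fintype.card P + 1) * (Fintype.card P : ℝ) ^ Fintype.card P / Fintype.card α := by
  have hn' : (0 : ℝ) < Fintype.card α := by exact_mod_cast hn
  have hn1 : (1 : ℝ) ≤ Fintype.card α := by exact_mod_cast hn
  have key := sum_based_le b hx hn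
  have h1 : (((based b x).filter fun f => ¬ Function.Injective f).card : ℝ) *
      (Fintype.card α / (Fintype.card α : ℝ) ^ Fintype.card P) ≤
      ∑ f ∈ based b x, ((Fintype.card α : ℝ) ^ (Finset.univ.image f).card)⁻¹ := by
    rw [← nsmul_eq_mul, ← Finset.sum_const]
    refine (Finset.sum_le_sum fun f hf => ?_).trans
      (Finset.sum_le_sum_of_subset_of_nonneg (Finset.filter_subset _ _) fun _ _ _ => by positivity)
    rw [div_le_iff₀ (by positivity), inv_mul_eq_div, le_div_iff₀ (by positivity), ← pow_succ']
    exact pow_le_pow_right₀ hn1 (card_image_lt (Finset.mem_filter.1 hf).2)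
  rw [le_div_iff₀ hn']
  refine le_trans (le_of_eq ?_) ((mul_le_mul_of_nonneg_left h1 (by positivity)).trans key)
  ring

variable (s ℓ) in
open Classical in
/-- The probability that a uniform tuple of permutations is compatible with `f`. -/
def wt (f : P → α) : ℝ :=
  ((Finset.univ.filter fun ρ : Fin k → Equiv.Perm α => Compat s ℓ ρ f).card : ℝ) /
    ((Fintype.card α).factorial : ℝ) ^ k

lemma wt_nonneg (f : P → α) : 0 ≤ wt s ℓ f := by
  unfold wt
  positivity

lemma wt_eq {ρ₀ : Fin k → Equiv.Perm α} {f : P → α} (h0 : Compat s ℓ ρ₀ f) :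
    wt s ℓ f = ∏ a, ((Fintype.card α).descFactorial (dom s ℓ f a).card : ℝ)⁻¹ := by
  classical
  unfold wt
  rw [card_compat h0]
  have : ((Fintype.card α).factorial : ℝ) ^ k = ∏ _a : Fin k, ((Fintype.card α).factorial : ℝ) := by
    simp
  rw [this]
  push_cast
  rw [← Finset.prod_div_distrib]
  refine Finset.prod_congr rfl fun a _ => ?_
  have hle : (dom s ℓ f a).card ≤ Fintype.card α := Finset.card_le_univ _
  rw [← Nat.factorial_mul_descFactorial hle]
  have h1 : ((Fintype.card α - (dom s ℓ f a).card).factorial : ℝ) ≠ 0 := by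
    exact_mod_cast Nat.factorial_ne_zero _
  push_cast
  field_simp

lemma wt_le {ρ₀ : Fin k → Equiv.Perm α} {f : P → α} (h0 : Compat s ℓ ρ₀ f)
    (hn : 0 < Fintype.card α) (hP : 2 * Fintype.card P ≤ Fintype.card α) :
    wt s ℓ f ≤ (2 / (Fintype.card α : ℝ)) ^ ∑ a, (dom s ℓ f a).card := by
  have hn' : (0 : ℝ) < Fintype.card α := by exact_mod_cast hn
  rw [wt_eq h0, ← Finset.prod_pow_eq_pow_sum]
  refine Finset.prod_le_prod (fun a _ => by positivity) fun a _ => ?_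
  set d := (dom s ℓ f a).card with hd
  have hdP : d ≤ Fintype.card P := Finset.card_image_le.trans (Finset.card_le_univ _)
  have h1 := Nat.pow_sub_le_descFactorial (Fintype.card α) d
  have h2 : ((Fintype.card α : ℝ) / 2) ^ d ≤ ((Fintype.card α).descFactorial d : ℝ) := by
    refine le_trans ?_ (show (((Fintype.card α + 1 - d : ℕ) : ℝ)) ^ d ≤ _ by exact_mod_cast h1)
    refine pow_le_pow_left₀ (by positivity) ?_ _
    rw [Nat.cast_sub (by omega)]
    have h3 : (2 : ℝ) * d ≤ Fintype.card α := by exact_mod_cast (by omega : 2 * d ≤ Fintype.card α)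
    push_cast
    linarith
  rw [show (2 / (Fintype.card α : ℝ)) = ((Fintype.card α : ℝ) / 2)⁻¹ by rw [inv_div], inv_pow]
  exact inv_anti₀ (by positivity) h2

open Classical in
/-- The non-injective placements contribute `O(1/n)` after normalization by `n ^ m`. -/
lemma sum_wt_not_injective_le {St : Set P}
    (h1 : ∀ p, ℓ (s p) ≠ flip (ℓ p))
    (h2 : ∀ p q, (∀ n : ℕ, ℓ ((s ^ n) p) = ℓ ((s ^ n) q)) →
      ∃ n : ℕ, (s ^ n) p ∈ St ∧ (s ^ n) q ∈ St)
    (h3 : ∀ p q, ¬ ∀ n : ℕ, ℓ ((s ^ n) p) = flip (ℓ ((s⁻¹ ^ (n + 1)) q)))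
    (b : Fin m → P) {x : Fin m → α} (hx : Function.Injective x)
    (hn : 0 < Fintype.card α) (hP : 2 * Fintype.card P ≤ Fintype.card α) :
    (Fintype.card α : ℝ) ^ m * ∑ f ∈ ((based b x).filter fun f => Set.InjOn f St).filter
      (fun f => ¬ Function.Injective f), wt s ℓ f ≤
      2 ^ Fintype.card P *
        ((Fintype.card P + 1) * (Fintype.card P : ℝ) ^ Fintype.card P) / Fintype.card α := by
  have hn' : (0 : ℝ) < Fintype.card α := by exact_mod_cast hn
  have hn1 : (1 : ℝ) ≤ Fintype.card α := by exact_mod_cast hn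
  have hw : ∀ f ∈ ((based b x).filter fun f => Set.InjOn f St).filter
      (fun f => ¬ Function.Injective f), wt s ℓ f ≤ (2 ^ Fintype.card P / Fintype.card α) *
        ((Fintype.card α : ℝ) ^ (Finset.univ.image f).card)⁻¹ := by
    intro f hf
    obtain ⟨hf1, hf2⟩ := Finset.mem_filter.1 hf
    have hf3 := (Finset.mem_filter.1 hf1).2
    by_cases hc : ∃ ρ : Fin k → Equiv.Perm α, Compat s ℓ ρ f
    · obtain ⟨ρ, hc⟩ := hc
      refine (wt_le hc hn hP).trans ?_
      rw [div_pow, ← div_eq_mul_inv, div_div, ← pow_succ']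
      exact div_le_div₀ (by positivity)
        (pow_le_pow_right₀ (by norm_num) (sum_card_dom_le f)) (by positivity)
        (pow_le_pow_right₀ hn1 (euler h1 h2 h3 hc hf3 hf2))
    · have : wt s ℓ f = 0 := by
        unfold wt
        rw [Finset.filter_false_of_mem (fun ρ _ h => hc ⟨ρ, h⟩)]
        simp
      rw [this]
      positivity
  calc _ ≤ (Fintype.card α : ℝ) ^ m * ∑ f ∈ based b x, (2 ^ Fintype.card P / Fintype.card α) *
        ((Fintype.card α : ℝ) ^ (Finset.univ.image f).card)⁻¹ := by
        refine mul_le_mul_of_nonneg_left ((Finset.sum_le_sum hw).trans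
          (Finset.sum_le_sum_of_subset_of_nonneg
            ((Finset.filter_subset _ _).trans (Finset.filter_subset _ _))
            fun _ _ _ => by positivity)) (by positivity)
    _ = (2 ^ Fintype.card P / Fintype.card α) * ((Fintype.card α : ℝ) ^ m *
        ∑ f ∈ based b x, ((Fintype.card α : ℝ) ^ (Finset.univ.image f).card)⁻¹) := by
        rw [← Finset.mul_sum]
        ring
    _ ≤ (2 ^ Fintype.card P / Fintype.card α) * _ :=
        mul_le_mul_of_nonneg_left (sum_based_le b hx hn) (by positivity)
    _ = _ := by ring

end analytic

/-! ### The limit -/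

lemma tendsto_descFactorial_div (d : ℕ) :
    Tendsto (fun n : ℕ => (n.descFactorial d : ℝ) / (n : ℝ) ^ d) atTop (nhds 1) := by
  induction d with
  | zero => simp
  | succ d ih =>
    have h1 : Tendsto (fun n : ℕ => 1 - (d : ℝ) / (n : ℝ)) atTop (nhds 1) := by
      simpa using (tendsto_const_nhds (x := (1 : ℝ))).sub (tendsto_const_div_atTop_nhds_zero_nat (d : ℝ))
    have h2 := h1.mul ih
    rw [one_mul] at h2
    refine h2.congr' ?_
    filter_upwards [eventually_ge_atTop (d + 1)] with n hn
    have hn0 : (n : ℝ) ≠ 0 := by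
      have : n ≠ 0 := by omega
      exact_mod_cast this
    rw [Nat.descFactorial_succ, Nat.cast_mul, Nat.cast_sub (by omega)]
    field_simp
    ring

open Classical in
/-- The expected number of compatible admissible placements is asymptotic to `n ^ (-m)`: there are
about `n ^ (|P| - m)` injective ones, each of probability about `n ^ (-|P|)`, and the others are
negligible. -/
lemma tendsto_sum_wt {k m : ℕ} {P : Type*} {s : Equiv.Perm P} {ℓ : P → Fin k × Bool}
    [Fintype P] {St : Set P}
    (h1 : ∀ p, ℓ (s p) ≠ flip (ℓ p))
    (h2 : ∀ p q, (∀ n : ℕ, ℓ ((s ^ n) p) = ℓ ((s ^ n) q)) →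
      ∃ n : ℕ, (s ^ n) p ∈ St ∧ (s ^ n) q ∈ St)
    (h3 : ∀ p q, ¬ ∀ n : ℕ, ℓ ((s ^ n) p) = flip (ℓ ((s⁻¹ ^ (n + 1)) q)))
    {b : Fin m → P} (hb : Function.Injective b) :
    Tendsto (fun n : ℕ => (n : ℝ) ^ m * ∑ f : P → Fin n with
      (∀ i : Fin m, (f (b i) : ℕ) = i) ∧ Set.InjOn f St, wt s ℓ f) atTop (nhds 1) := by
  set C : ℝ := (Fintype.card P + 1) * (Fintype.card P : ℝ) ^ Fintype.card P with hC
  set d : Fin k → ℕ := fun a => (Finset.univ.filter fun p : P => (ℓ p).1 = a).card with hd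
  set R : ℕ → ℝ := fun n => ∏ a, ((n.descFactorial (d a) : ℝ) / (n : ℝ) ^ d a)⁻¹ with hR
  have hRlim : Tendsto R atTop (nhds 1) := by
    have : Tendsto R atTop (nhds (∏ _a : Fin k, (1 : ℝ)⁻¹)) :=
      tendsto_finsetProd _ fun a _ => (tendsto_descFactorial_div (d a)).inv₀ one_ne_zero
    simpa using this
  have hR0 : ∀ n, 0 ≤ R n := fun n => Finset.prod_nonneg fun a _ => by positivity
  have hlow : Tendsto (fun n : ℕ => (1 - C / (n : ℝ)) * R n) atTop (nhds 1) := by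
    simpa using ((tendsto_const_nhds (x := (1 : ℝ))).sub
      (tendsto_const_div_atTop_nhds_zero_nat C)).mul hRlim
  have hupp : Tendsto (fun n : ℕ => R n + (2 ^ Fintype.card P * C) / (n : ℝ)) atTop (nhds 1) := by
    simpa using hRlim.add (tendsto_const_div_atTop_nhds_zero_nat (2 ^ Fintype.card P * C))
  have main : ∀ n : ℕ, m ≤ n → 2 * Fintype.card P ≤ n → 0 < n →
      (1 - C / (n : ℝ)) * R n ≤ (n : ℝ) ^ m * (∑ f : P → Fin n with
        (∀ i : Fin m, (f (b i) : ℕ) = i) ∧ Set.InjOn f St, wt s ℓ f) ∧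
      (n : ℝ) ^ m * (∑ f : P → Fin n with
        (∀ i : Fin m, (f (b i) : ℕ) = i) ∧ Set.InjOn f St, wt s ℓ f) ≤
        R n + (2 ^ Fintype.card P * C) / (n : ℝ) := by
    intro n hm hP hn
    have hn' : (0 : ℝ) < n := by exact_mod_cast hn
    set x : Fin m → Fin n := Fin.castLE hm with hx
    have hxi : Function.Injective x := Fin.castLE_injective hm
    have hF : (Finset.univ.filter fun f : P → Fin n =>
        (∀ i : Fin m, (f (b i) : ℕ) = i) ∧ Set.InjOn f St) =
        (based b x).filter fun f => Set.InjOn f St := by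
      ext f
      simp [based, hx, Fin.ext_iff]
    rw [hF, ← Finset.sum_filter_add_sum_filter_not _ (fun f => Function.Injective f), mul_add]
    have hB := sum_wt_not_injective_le h1 h2 h3 b hxi (by simpa using hn) (by simpa using hP)
    have hB0 : 0 ≤ (n : ℝ) ^ m * ∑ f ∈ ((based b x).filter fun f => Set.InjOn f St).filter
      (fun f => ¬ Function.Injective f), wt s ℓ f :=
      mul_nonneg (by positivity) (Finset.sum_nonneg fun f _ => wt_nonneg f)
    have hI : ((based b x).filter fun f => Set.InjOn f St).filter
        (fun f => Function.Injective f) = (based b x).filter fun f => Function.Injective f := by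
      ext f
      simp only [Finset.mem_filter, and_assoc]
      exact ⟨fun h => ⟨h.1, h.2.2⟩, fun h => ⟨h.1, h.2.injOn, h.2⟩⟩
    have hS : ∑ f ∈ (based b x).filter (fun f => Function.Injective f), wt s ℓ f =
        ((based b x).filter fun f => Function.Injective f).card *
          (R n / (n : ℝ) ^ Fintype.card P) := by
      rw [← nsmul_eq_mul, ← Finset.sum_const]
      refine Finset.sum_congr rfl fun f hf => ?_
      have hf' := (Finset.mem_filter.1 hf).2
      obtain ⟨ρ, hρ⟩ := exists_compat h1 hf'
      rw [wt_eq hρ, eq_div_iff (by positivity), hR]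
      rw [← sum_card_label (ℓ := ℓ), ← Finset.prod_pow_eq_pow_sum, ← Finset.prod_mul_distrib]
      refine Finset.prod_congr rfl fun a _ => ?_
      rw [card_dom_of_injective h1 hf', Fintype.card_fin, inv_div, div_eq_mul_inv, mul_comm]
    have hN := card_not_injective_le b hxi (by simpa using hn)
    have hA := card_based (α := Fin n) hb x
    have hsplit := Finset.card_filter_add_card_filter_not (s := based b x)
      (fun f => Function.Injective f)
    rw [Fintype.card_fin] at hB hN hA
    set I : ℝ := (((based b x).filter fun f => Function.Injective f).card : ℝ) with hIdef
    set J : ℝ := (((based b x).filter fun f => ¬ Function.Injective f).card : ℝ) with hJdef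
    have hIJ : I * (n : ℝ) ^ m / (n : ℝ) ^ Fintype.card P +
        J * (n : ℝ) ^ m / (n : ℝ) ^ Fintype.card P = 1 := by
      rw [← add_div, ← add_mul, div_eq_one_iff_eq (by positivity), hIdef, hJdef]
      rw [← hsplit] at hA
      exact_mod_cast hA
    have hJ0 : 0 ≤ J * (n : ℝ) ^ m / (n : ℝ) ^ Fintype.card P := by positivity
    rw [hI, hS, show (n : ℝ) ^ m * (I * (R n / (n : ℝ) ^ Fintype.card P)) =
      (I * (n : ℝ) ^ m / (n : ℝ) ^ Fintype.card P) * R n by ring]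
    have l1 : (1 - C / (n : ℝ)) * R n ≤ (I * (n : ℝ) ^ m / (n : ℝ) ^ Fintype.card P) * R n :=
      mul_le_mul_of_nonneg_right (by linarith) (hR0 n)
    have l2 : (I * (n : ℝ) ^ m / (n : ℝ) ^ Fintype.card P) * R n ≤ 1 * R n :=
      mul_le_mul_of_nonneg_right (by linarith) (hR0 n)
    exact ⟨by linarith, by linarith⟩
  refine tendsto_of_tendsto_of_tendsto_of_le_of_le' hlow hupp ?_ ?_
  all_goals
    filter_upwards [eventually_ge_atTop m, eventually_ge_atTop (2 * Fintype.card P),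
      eventually_gt_atTop 0] with n a1 a2 a3
  · exact (main n a1 a2 a3).1
  · exact (main n a1 a2 a3).2

/-! ### Cyclic words -/

section word

variable {k t : ℕ} (w : ZMod t → Fin k × Bool)

/-- The product of the first `v` letters of the periodic word `w`, the earliest letter being the
rightmost factor. -/
def pref : ℕ → FreeGroup (Fin k)
  | 0 => 1
  | v + 1 => FreeGroup.mk [w (v : ZMod t)] * pref v

variable {w}

lemma pref_add {g : ℕ} (hg : ∀ z, w (z + (g : ZMod t)) = w z) (v : ℕ) :
    pref w (v + g) = pref w v * pref w g := by
  induction v with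
  | zero => simp [pref]
  | succ v ih =>
    rw [show v + 1 + g = (v + g) + 1 by omega, pref, pref, ih, Nat.cast_add, hg, mul_assoc]

lemma pref_mul {g : ℕ} (hg : ∀ z, w (z + (g : ZMod t)) = w z) (e : ℕ) :
    pref w (e * g) = pref w g ^ e := by
  induction e with
  | zero => simp [pref]
  | succ e ih => rw [Nat.succ_mul, pref_add hg, ih, pow_succ]

/-- If the word spelled by `w` over one period is not a proper power, then `w` has no period smaller
than `t`: a period may be replaced by its gcd with `t`. -/
lemma eq_of_shift_eq [NeZero t]
    (hw : ¬ ∃ (Ω' : FreeGroup (Fin k)) (e : ℕ), 2 ≤ e ∧ pref w t = Ω' ^ e)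
    {x y : ZMod t} (h : ∀ n : ℕ, w (x + n) = w (y + n)) : x = y := by
  by_contra hne
  have hd0 : y - x ≠ 0 := sub_ne_zero.2 (Ne.symm hne)
  set d := y - x with hd
  have hper : ∀ z, w (z + d) = w z := by
    intro z
    have := h (z - x).val
    rw [ZMod.natCast_zmod_val] at this
    rw [show x + (z - x) = z by ring, show y + (z - x) = z + d by rw [hd]; ring] at this
    exact this.symm
  have hperj : ∀ (j : ℕ) z, w (z + j * d) = w z := by
    intro j
    induction j with
    | zero => simp
    | succ j ih =>
      intro z
      rw [show z + ((j + 1 : ℕ) : ZMod t) * d = (z + j * d) + d by push_cast; ring, hper, ih]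
  set g := Nat.gcd d.val t with hg
  have hgper : ∀ z, w (z + (g : ZMod t)) = w z := by
    intro z
    have hb := congrArg (Int.cast : ℤ → ZMod t) (Nat.gcd_eq_gcd_ab d.val t)
    push_cast at hb
    rw [ZMod.natCast_zmod_val, ZMod.natCast_self, zero_mul, add_zero] at hb
    have := hperj ((d.val.gcdA t : ZMod t)).val z
    rw [ZMod.natCast_zmod_val] at this
    rw [hg, hb, mul_comm, this]
  have hdpos : 0 < d.val := Nat.pos_of_ne_zero fun h0 => hd0 ((ZMod.val_eq_zero d).1 h0)
  have hgle : g ≤ d.val := Nat.gcd_le_left _ hdpos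
  have hlt : d.val < t := ZMod.val_lt d
  obtain ⟨e, he⟩ : g ∣ t := Nat.gcd_dvd_right _ _
  refine hw ⟨pref w g, e, ?_, ?_⟩
  · by_contra hlt2
    have : e = 0 ∨ e = 1 := by omega
    rcases this with rfl | rfl <;> omega
  · rw [← pref_mul hgper e]
    congr 1
    rw [he, mul_comm]

/-- A cyclically reduced word is not a cyclic rotation of its inverse: the reflection
`z ↦ c - z` of `ZMod t` would fix a letter or exchange two adjacent ones. -/
lemma not_inverse [NeZero t] (hred : ∀ x, w (x + 1) ≠ flip (w x)) (x y : ZMod t) :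
    ¬ ∀ n : ℕ, w (x + n) = flip (w (y - (n + 1))) := by
  intro h
  set c := x + y - 1 with hc
  have hrefl : ∀ z, w z = flip (w (c - z)) := by
    intro z
    have := h (z - x).val
    rw [ZMod.natCast_zmod_val] at this
    rwa [show x + (z - x) = z by ring, show y - (z - x + 1) = c - z by rw [hc]; ring] at this
  obtain ⟨j, hj⟩ : ∃ j, c.val = 2 * j ∨ c.val = 2 * j + 1 := ⟨c.val / 2, by omega⟩
  have hcc := ZMod.natCast_zmod_val c
  rcases hj with hj | hj
  · have := hrefl (j : ZMod t)
    rw [show c - (j : ZMod t) = j by rw [← hcc, hj]; push_cast; ring] at this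
    have h2 := congrArg Prod.snd this
    simp [flip] at h2
  · have := hrefl (j : ZMod t)
    rw [show c - (j : ZMod t) = j + 1 by rw [← hcc, hj]; push_cast; ring] at this
    exact hred j (by rw [this, flip_flip])

lemma lift_mk_singleton {G : Type*} (ρ : Fin k → Equiv.Perm G) (x : Fin k × Bool) :
    FreeGroup.lift ρ (FreeGroup.mk [x]) = act ρ x := by
  simp [FreeGroup.lift_mk, act]

/-! ### The walks of `m` cycles -/

variable {m : ℕ} (μ : Fin m → ℕ) (w)

/-- The positions along `m` closed walks, the `i`-th of which reads the word of length `t`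
exactly `μ i` times. -/
abbrev Pos (t : ℕ) {m : ℕ} (μ : Fin m → ℕ) : Type := Σ i : Fin m, ZMod (μ i * t)

/-- One step along the walks. -/
def step (t : ℕ) : Equiv.Perm (Pos t μ) := Equiv.sigmaCongrRight fun _ => Equiv.addRight 1

/-- The letter read at a position. -/
def lab (p : Pos t μ) : Fin k × Bool := w (ZMod.castHom (dvd_mul_left t (μ p.1)) (ZMod t) p.2)

/-- The positions at which a new reading of the word starts. -/
def starts (t : ℕ) : Set (Pos t μ) :=
  {p | ZMod.castHom (dvd_mul_left t (μ p.1)) (ZMod t) p.2 = 0}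

variable {μ w}

lemma step_mk (i : Fin m) (x : ZMod (μ i * t)) : step μ t ⟨i, x⟩ = ⟨i, x + 1⟩ := rfl

lemma lab_mk (i : Fin m) (x : ZMod (μ i * t)) :
    lab w μ ⟨i, x⟩ = w (ZMod.castHom (dvd_mul_left t (μ i)) (ZMod t) x) := rfl

lemma step_pow (n : ℕ) (i : Fin m) (x : ZMod (μ i * t)) :
    (step μ t ^ n) ⟨i, x⟩ = ⟨i, x + n⟩ := by
  induction n with
  | zero => simp
  | succ n ih =>
    rw [pow_succ', Equiv.Perm.mul_apply, ih]
    simp [step_mk, add_assoc]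

lemma step_inv_pow (n : ℕ) (i : Fin m) (x : ZMod (μ i * t)) :
    ((step μ t)⁻¹ ^ n) ⟨i, x⟩ = ⟨i, x - n⟩ := by
  rw [inv_pow, Equiv.Perm.inv_eq_iff_eq, step_pow]
  simp

lemma lab_step (hred : ∀ x, w (x + 1) ≠ flip (w x)) (p : Pos t μ) :
    lab w μ (step μ t p) ≠ flip (lab w μ p) := by
  rcases p with ⟨i, x⟩
  rw [step_mk, lab_mk, lab_mk, map_add, map_one]
  exact hred _

lemma lab_shift [NeZero t]
    (hw : ¬ ∃ (Ω' : FreeGroup (Fin k)) (e : ℕ), 2 ≤ e ∧ pref w t = Ω' ^ e) (p q : Pos t μ)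
    (h : ∀ n : ℕ, lab w μ ((step μ t ^ n) p) = lab w μ ((step μ t ^ n) q)) :
    ∃ n : ℕ, (step μ t ^ n) p ∈ starts μ t ∧ (step μ t ^ n) q ∈ starts μ t := by
  rcases p with ⟨i, x⟩
  rcases q with ⟨j, y⟩
  simp only [step_pow, lab_mk, map_add, map_natCast] at h
  have e := eq_of_shift_eq hw h
  refine ⟨(-(ZMod.castHom (dvd_mul_left t (μ i)) (ZMod t) x)).val, ?_, ?_⟩
  · rw [step_pow, starts, Set.mem_ofPred_eq, map_add, map_natCast, ZMod.natCast_zmod_val,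
      add_neg_cancel]
  · rw [step_pow, starts, Set.mem_ofPred_eq, map_add, map_natCast, ZMod.natCast_zmod_val, e,
      add_neg_cancel]

lemma lab_not_inverse [NeZero t] (hred : ∀ x, w (x + 1) ≠ flip (w x)) (p q : Pos t μ) :
    ¬ ∀ n : ℕ, lab w μ ((step μ t ^ n) p) =
      flip (lab w μ (((step μ t)⁻¹ ^ (n + 1)) q)) := by
  rcases p with ⟨i, x⟩
  rcases q with ⟨j, y⟩
  intro h
  refine not_inverse hred (ZMod.castHom (dvd_mul_left t (μ i)) (ZMod t) x)
    (ZMod.castHom (dvd_mul_left t (μ j)) (ZMod t) y) fun n => ?_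
  have := h n
  rw [step_pow, step_inv_pow] at this
  simpa [lab] using this

variable {α : Type*}

lemma lift_pref_succ (ρ : Fin k → Equiv.Perm α) (v : ℕ) (a : α) :
    FreeGroup.lift ρ (pref w (v + 1)) a = act ρ (w v) (FreeGroup.lift ρ (pref w v) a) := by
  rw [pref, map_mul, lift_mk_singleton, Equiv.Perm.mul_apply]

lemma lift_pref_mul (ρ : Fin k → Equiv.Perm α) (j : ℕ) :
    FreeGroup.lift ρ (pref w (j * t)) = FreeGroup.lift ρ (pref w t) ^ j := by
  rw [pref_mul (by simp), map_pow]

/-- A compatible placement follows the trajectories of its base points. -/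
lemma compat_traj {ρ : Fin k → Equiv.Perm α} {f : Pos t μ → α}
    (h : Compat (step μ t) (lab w μ) ρ f) (i : Fin m) (v : ℕ) :
    f ⟨i, (v : ZMod (μ i * t))⟩ = FreeGroup.lift ρ (pref w v) (f ⟨i, 0⟩) := by
  induction v with
  | zero => simp [pref]
  | succ v ih =>
    rw [lift_pref_succ, ← ih]
    have := h ⟨i, v⟩
    rw [lab_mk, step_mk, map_natCast] at this
    rw [this]
    push_cast
    rfl

lemma compat_unique {ρ : Fin k → Equiv.Perm α} [∀ i, NeZero (μ i * t)] {f g : Pos t μ → α}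
    (hf : Compat (step μ t) (lab w μ) ρ f) (hg : Compat (step μ t) (lab w μ) ρ g)
    (h : ∀ i, f ⟨i, 0⟩ = g ⟨i, 0⟩) : f = g := by
  funext ⟨i, x⟩
  rw [← ZMod.natCast_zmod_val x, compat_traj hf, compat_traj hg, h]

/-- The permutation spelled by the word lies in `Aset μ` exactly when the closed walks can be placed
along the trajectories of the first `m` points, with distinct starting positions. -/
lemma mem_Aset_iff [NeZero t] [∀ i, NeZero (μ i * t)] {n : ℕ} (hmn : m ≤ n)
    (hμ : ∀ i, 1 ≤ μ i) (ρ : Fin k → Equiv.Perm (Fin n)) :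
    FreeGroup.lift ρ (pref w t) ∈ Aset (n := n) μ ↔
      ∃ f : Pos t μ → Fin n, ((∀ i : Fin m, (f ⟨i, 0⟩ : ℕ) = i) ∧ Set.InjOn f (starts μ t)) ∧
        Compat (step μ t) (lab w μ) ρ f := by
  set σ := FreeGroup.lift ρ (pref w t) with hσ
  have ht : 0 < t := Nat.pos_of_ne_zero (NeZero.ne t)
  constructor
  · rintro ⟨hlen, hcyc⟩
    have hper : ∀ i : Fin m, Function.Periodic
        (fun v : ℕ => FreeGroup.lift ρ (pref w v) (Fin.castLE hmn i)) (μ i * t) := by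
      intro i v
      have h1 : (σ ^ μ i) (Fin.castLE hmn i) = Fin.castLE hmn i := by
        have h2 := hlen i (i.2.trans_le hmn)
        have h3 := Function.isPeriodicPt_minimalPeriod σ (Fin.castLE hmn i)
        have h4 : Function.minimalPeriod σ (Fin.castLE hmn i) = μ i := h2
        rw [h4, Function.IsPeriodicPt, Function.IsFixedPt, Equiv.Perm.iterate_eq_pow] at h3
        exact h3
      have h5 : pref w (v + μ i * t) = pref w v * pref w (μ i * t) := pref_add (by simp) v
      simp only
      rw [h5, map_mul, Equiv.Perm.mul_apply, lift_pref_mul, ← hσ, h1]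
    have hval : ∀ p ∈ starts μ t, ∃ j < μ p.1, p.2.val = j * t := by
      intro p hp
      have hp' : ZMod.castHom (dvd_mul_left t (μ p.1)) (ZMod t) p.2 = 0 := hp
      rw [ZMod.castHom_apply, ZMod.cast_eq_val, ZMod.natCast_eq_zero_iff] at hp'
      obtain ⟨j, hj⟩ := hp'
      refine ⟨j, ?_, by rw [hj, mul_comm]⟩
      have := ZMod.val_lt p.2
      rw [hj, mul_comm] at this
      exact Nat.lt_of_mul_lt_mul_right this
    refine ⟨fun p => FreeGroup.lift ρ (pref w p.2.val) (Fin.castLE hmn p.1), ⟨?_, ?_⟩, ?_⟩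
    · intro i
      simp [pref]
    · intro p hp q hq hpq
      obtain ⟨j, hj, hjv⟩ := hval p hp
      obtain ⟨j', hj', hjv'⟩ := hval q hq
      rcases p with ⟨i, x⟩
      rcases q with ⟨i', x'⟩
      simp only at hj hj' hjv hjv' hpq
      rw [hjv, hjv', lift_pref_mul, lift_pref_mul, ← hσ] at hpq
      have hii : i = i' := by
        by_contra hne
        refine hcyc i i' hne (i.2.trans_le hmn) (i'.2.trans_le hmn) ?_
        have h1 : σ.SameCycle (Fin.castLE hmn i) ((σ ^ j) (Fin.castLE hmn i)) := ⟨j, by simp⟩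
        have h2 : σ.SameCycle (Fin.castLE hmn i') ((σ ^ j') (Fin.castLE hmn i')) := ⟨j', by simp⟩
        rw [← hpq] at h2
        exact h1.trans h2.symm
      subst hii
      have hlen' : Function.minimalPeriod σ (Fin.castLE hmn i) = μ i := hlen i (i.2.trans_le hmn)
      rw [← Equiv.Perm.iterate_eq_pow, ← Equiv.Perm.iterate_eq_pow] at hpq
      have hjj : j = j' := by
        refine Function.iterate_injOn_Iio_minimalPeriod (f := σ) (x := Fin.castLE hmn i) ?_ ?_ hpq
        · rw [Set.mem_Iio, hlen']
          exact hj
        · rw [Set.mem_Iio, hlen']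
          exact hj'
      have : x = x' := ZMod.val_injective _ (by rw [hjv, hjv', hjj])
      rw [this]
    · rintro ⟨i, x⟩
      have e1 : ((x + 1).val : ℕ) = (x.val + 1) % (μ i * t) := by
        rw [← ZMod.val_natCast]
        push_cast
        rw [ZMod.natCast_zmod_val]
      rw [step_mk, lab_mk]
      simp only
      rw [e1]
      refine Eq.trans ?_ ((hper i).map_mod_nat (x.val + 1)).symm
      rw [lift_pref_succ, ZMod.castHom_apply, ZMod.cast_eq_val]
  · rintro ⟨f, ⟨hb, hinj⟩, hc⟩
    have hb' : ∀ (i : Fin m) (hi : (i : ℕ) < n), (⟨i, hi⟩ : Fin n) = f ⟨i, 0⟩ :=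
      fun i hi => Fin.ext (hb i).symm
    have hpow : ∀ (i : Fin m) (j : ℕ),
        (σ ^ j) (f ⟨i, 0⟩) = f ⟨i, ((j * t : ℕ) : ZMod (μ i * t))⟩ := by
      intro i j
      rw [compat_traj hc, lift_pref_mul]
    have hst : ∀ (i : Fin m) (j : ℕ),
        (⟨i, ((j * t : ℕ) : ZMod (μ i * t))⟩ : Pos t μ) ∈ starts μ t := by
      intro i j
      simp only [starts, Set.mem_ofPred_eq, map_natCast]
      simp
    have hst0 : ∀ i : Fin m, (⟨i, 0⟩ : Pos t μ) ∈ starts μ t := by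
      intro i
      simp [starts]
    constructor
    · intro i hi
      rw [cycLen, hb']
      have hp : Function.IsPeriodicPt σ (μ i) (f ⟨i, 0⟩) := by
        rw [Function.IsPeriodicPt, Function.IsFixedPt, Equiv.Perm.iterate_eq_pow, hpow,
          ZMod.natCast_self]
      refine le_antisymm (hp.minimalPeriod_le (hμ i)) ?_
      have h1 := Function.isPeriodicPt_minimalPeriod σ (f ⟨i, 0⟩)
      have h0 := hp.minimalPeriod_pos (hμ i)
      rw [Function.IsPeriodicPt, Function.IsFixedPt, Equiv.Perm.iterate_eq_pow, hpow] at h1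
      have h2 := hinj (hst i _) (hst0 i) h1
      have h3 : ((Function.minimalPeriod σ (f ⟨i, 0⟩) * t : ℕ) : ZMod (μ i * t)) = 0 := by
        simpa using h2
      rw [ZMod.natCast_eq_zero_iff] at h3
      exact Nat.le_of_dvd h0 (Nat.dvd_of_mul_dvd_mul_right ht h3)
    · intro i j hij hi hj hsame
      obtain ⟨a, -, ha⟩ := hsame.exists_pow_eq'
      rw [hb', hb', hpow] at ha
      have := hinj (hst i a) (hst0 j) ha
      exact hij (congrArg Sigma.fst this)

end word

open Classical in
/-- For each tuple of permutations the placement in `mem_Aset_iff` is unique, so the event is a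
disjoint union over placements. -/
lemma prob_eq_sum {k t m : ℕ} {w : ZMod t → Fin k × Bool} {μ : Fin m → ℕ}
    [NeZero t] [∀ i, NeZero (μ i * t)] {n : ℕ} (hmn : m ≤ n) (hμ : ∀ i, 1 ≤ μ i) :
    prob (fun _ : Fin k → Equiv.Perm (Fin n) => ((n.factorial : ℝ) ^ k)⁻¹)
      {ρ | FreeGroup.lift ρ (pref w t) ∈ Aset μ} =
    ∑ f : Pos t μ → Fin n with
      (∀ i : Fin m, (f ⟨i, 0⟩ : ℕ) = i) ∧ Set.InjOn f (starts μ t),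
        wt (step μ t) (lab w μ) f := by
  have h1 : (Finset.univ.filter fun ρ : Fin k → Equiv.Perm (Fin n) =>
      FreeGroup.lift ρ (pref w t) ∈ Aset μ) =
      (Finset.univ.filter fun f : Pos t μ → Fin n =>
        (∀ i : Fin m, (f ⟨i, 0⟩ : ℕ) = i) ∧ Set.InjOn f (starts μ t)).biUnion fun f =>
          Finset.univ.filter fun ρ : Fin k → Equiv.Perm (Fin n) =>
            Compat (step μ t) (lab w μ) ρ f := by
    ext ρ
    simp [mem_Aset_iff hmn hμ]
  have h2 : prob (fun _ : Fin k → Equiv.Perm (Fin n) => ((n.factorial : ℝ) ^ k)⁻¹)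
      {ρ | FreeGroup.lift ρ (pref w t) ∈ Aset μ} =
      ((Finset.univ.filter fun ρ : Fin k → Equiv.Perm (Fin n) =>
      FreeGroup.lift ρ (pref w t) ∈ Aset μ).card : ℝ) * ((n.factorial : ℝ) ^ k)⁻¹ := by
    rw [prob, ← nsmul_eq_mul, ← Finset.sum_const, Finset.sum_filter]
    refine Finset.sum_congr rfl fun ρ _ => ?_
    simp [Set.indicator_apply]
  rw [h2, h1, Finset.card_biUnion, Nat.cast_sum, Finset.sum_mul]
  · refine Finset.sum_congr rfl fun f _ => ?_
    rw [wt, Fintype.card_fin, div_eq_mul_inv]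
  · intro f hf g hg hne
    refine Finset.disjoint_left.2 fun ρ h h' => hne ?_
    refine compat_unique (Finset.mem_filter.1 h).2 (Finset.mem_filter.1 h').2 fun i => ?_
    exact Fin.ext (((Finset.mem_filter.1 hf).2.1 i).trans ((Finset.mem_filter.1 hg).2.1 i).symm)

/-- A word with distinct extremal generators, as a reduced word on the cycle `ZMod t`. The rightmost
letter of the word acts first, so it is placed at `0`. -/
lemma exists_cyclic_word {k : ℕ} (Ω : FreeGroup (Fin k)) (hΩ1 : Ω ≠ 1)
    (hends : ∀ a b : Fin k × Bool, Ω.toWord.head? = some a →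
      Ω.toWord.getLast? = some b → a.1 ≠ b.1) :
    ∃ (t : ℕ) (_ : NeZero t) (w : ZMod t → Fin k × Bool),
      pref w t = Ω ∧ ∀ x, w (x + 1) ≠ flip (w x) := by
  set L := Ω.toWord with hL
  set M := L.reverse with hM
  have hne : L ≠ [] := by rwa [hL, Ne, FreeGroup.toWord_eq_nil_iff]
  have hlen : 0 < M.length := by
    rw [hM, List.length_reverse]
    exact List.length_pos_iff.2 hne
  have : NeZero M.length := ⟨hlen.ne'⟩
  refine ⟨M.length, inferInstance, fun x => M[x.val]'(ZMod.val_lt x), ?_, ?_⟩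
  · have key : ∀ v ≤ M.length, pref (fun x : ZMod M.length => M[x.val]'(ZMod.val_lt x)) v =
        FreeGroup.mk (M.take v).reverse := by
      intro v
      induction v with
      | zero => intro _; simp [pref, FreeGroup.one_eq_mk]
      | succ v ih =>
        intro hv
        rw [pref, ih (by omega), List.take_succ_eq_append_getElem (by omega), List.reverse_append,
          List.reverse_singleton, ← FreeGroup.mul_mk]
        have e : ((v : ℕ) : ZMod M.length).val = v := ZMod.val_natCast_of_lt (by omega)
        simp only [e]
    rw [key _ le_rfl, List.take_length, hM, List.reverse_reverse, hL, FreeGroup.mk_toWord]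
  · intro x hx
    simp only at hx
    have hxl := ZMod.val_lt x
    have e1 : (x + 1).val = (x.val + 1) % M.length := by
      rw [← ZMod.val_natCast]
      push_cast
      rw [ZMod.natCast_zmod_val]
    have hlenL : M.length = L.length := by rw [hM, List.length_reverse]
    rcases Nat.lt_or_ge (x.val + 1) M.length with hlt | hge
    · have hr : FreeGroup.IsReduced L := FreeGroup.isReduced_toWord
      rw [FreeGroup.IsReduced, List.isChain_iff_getElem] at hr
      have e2 : (x + 1).val = x.val + 1 := by rw [e1, Nat.mod_eq_of_lt hlt]
      have h3 := hr (L.length - 1 - (x.val + 1)) (by omega)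
      simp only [hM, e2, List.getElem_reverse] at hx
      have e3 : L.length - 1 - (x.val + 1) + 1 = L.length - 1 - x.val := by omega
      simp only [e3] at h3
      rw [hx] at h3
      simp [flip] at h3
    · have e2 : (x + 1).val = 0 := by
        rw [e1, show x.val + 1 = M.length by omega, Nat.mod_self]
      have e3 : x.val = M.length - 1 := by omega
      simp only [hM, e2, e3, List.getElem_reverse, List.length_reverse] at hx
      refine hends L[0] L[L.length - 1] ?_ ?_ ?_
      · rw [List.head?_eq_getElem?, List.getElem?_eq_getElem]
      · rw [List.getLast?_eq_getElem?, List.getElem?_eq_getElem]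
      · simp only [Nat.sub_zero, Nat.sub_self] at hx
        rw [hx]
        rfl

end WordPerm

/-- For `Ω ∈ F_k` not a proper power, cyclically reduced with two distinct extremal
letters, and independent uniform permutations `ρ_{1,n},…,ρ_{k,n}`:
for every Young diagram `μ`, `n^{ℓ(μ)}·P(Ω(ρ_{1,n},…,ρ_{k,n}) ∈ A^μ) → 1`. -/
theorem uniform_word_Aset_probability
    {k : ℕ} (Ω : FreeGroup (Fin k)) (hΩ1 : Ω ≠ 1)
    (hΩ : ¬ ∃ (Ω' : FreeGroup (Fin k)) (e : ℕ), 2 ≤ e ∧ Ω = Ω' ^ e)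
    (hends : ∀ a b : Fin k × Bool, Ω.toWord.head? = some a →
      Ω.toWord.getLast? = some b → a.1 ≠ b.1)
    (m : ℕ) (μ : Fin m → ℕ) (hμ : ∀ i, 1 ≤ μ i) (hmono : Antitone μ) :
    Tendsto (fun n : ℕ => (n : ℝ) ^ m *
        prob (fun _ : Fin k → Equiv.Perm (Fin n) => ((n.factorial : ℝ) ^ k)⁻¹)
          {ρ | (FreeGroup.lift ρ) Ω ∈ Aset μ})
      atTop (nhds 1) := by
  classical
  obtain ⟨t, ht, w, rfl, hred⟩ := WordPerm.exists_cyclic_word Ω hΩ1 hends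
  have : ∀ i, NeZero (μ i * t) := fun i =>
    ⟨Nat.mul_ne_zero (Nat.one_le_iff_ne_zero.1 (hμ i)) (NeZero.ne t)⟩
  have hb : Function.Injective fun i : Fin m => (⟨i, 0⟩ : WordPerm.Pos t μ) :=
    fun i j h => congrArg Sigma.fst h
  refine (WordPerm.tendsto_sum_wt (WordPerm.lab_step hred) (WordPerm.lab_shift hΩ)
    (WordPerm.lab_not_inverse hred) hb).congr' ?_
  filter_upwards [eventually_ge_atTop m] with n hn
  rw [WordPerm.prob_eq_sum hn hμ]
  congr!
end
end
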